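/- arXiv:2210.06214 — 3 statements merged into one kernel-verified Lean document; each statement's English description precedes it below -/
import Mathlib

section
/- Let k and n be positive integers. Suppose there exists an RDS(3, k + 1, n + 1). If there exist an RDSQS(3k + 1) and an RDGDD(3, 4, 3(k + 1)) of type 3^{k+1}, then there exists an RDSQS(3n + 1). -/
open Finset

/-- A parallel class on point set `Y`: a collection of blocks that partitions `Y`. -/
def IsParallelClass (Y : Finset ℕ) (P : Finset (Finset ℕ)) : Prop :=
  (∀ b ∈ P, b ⊆ Y) ∧ ∀ y ∈ Y, ∃! b, b ∈ P ∧ y ∈ b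

/-- A block collection `B` on point set `Y` is resolvable if it can be partitioned
into parallel classes of `Y`. -/
def Resolvable (Y : Finset ℕ) (B : Finset (Finset ℕ)) : Prop :=
  ∃ (r : ℕ) (P : Fin r → Finset (Finset ℕ)),
    (∀ i, IsParallelClass Y (P i)) ∧ (∀ i, P i ⊆ B) ∧ ∀ b ∈ B, ∃! i, b ∈ P i

/-- The blocks of the derived design at a point `x`:
`{B \ {x} : x ∈ B, B ∈ B}`. -/
def derivedBlocks (B : Finset (Finset ℕ)) (x : ℕ) : Finset (Finset ℕ) :=
  (B.filter fun b => x ∈ b).image fun b => b.erase x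

/-- A Steiner system S(t, k, v) on point set `X` with block collection `B`. -/
def IsSteiner (t k v : ℕ) (X : Finset ℕ) (B : Finset (Finset ℕ)) : Prop :=
  X.card = v ∧ (∀ b ∈ B, b ⊆ X ∧ b.card = k) ∧
  ∀ T ⊆ X, T.card = t → ∃! b, b ∈ B ∧ T ⊆ b

/-- An RDS(t, k, v): a Steiner system S(t, k, v) whose derived design at every
point is resolvable. -/
def IsRDS (t k v : ℕ) (X : Finset ℕ) (B : Finset (Finset ℕ)) : Prop :=
  IsSteiner t k v X B ∧ ∀ x ∈ X, Resolvable (X.erase x) (derivedBlocks B x)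

/-- Existence of an RDS(t, k, v). -/
def ExistsRDS (t k v : ℕ) : Prop := ∃ X B, IsRDS t k v X B

/-- Existence of an RDSQS(v), i.e. an RDS(3, 4, v). -/
def ExistsRDSQS (v : ℕ) : Prop := ExistsRDS 3 4 v

/-- A Kirkman triple system KTS(v): a resolvable Steiner triple system. -/
def IsKTS (v : ℕ) (X : Finset ℕ) (B : Finset (Finset ℕ)) : Prop :=
  IsSteiner 2 3 v X B ∧ Resolvable X B

/-- Existence of a large set of Kirkman triple systems LKTS(v): a partition of
all 3-element subsets of a v-element set into v - 2 classes, each a KTS(v). -/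
def ExistsLKTS (v : ℕ) : Prop :=
  ∃ (X : Finset ℕ) (C : Fin (v - 2) → Finset (Finset ℕ)),
    X.card = v ∧ (∀ i, IsKTS v X (C i)) ∧
    (∀ T : Finset ℕ, (T ⊆ X ∧ T.card = 3) ↔ ∃ i, T ∈ C i) ∧
    ∀ (T : Finset ℕ) (i j : Fin (v - 2)), T ∈ C i → T ∈ C j → i = j

/-- A t-wise balanced design S(t, K, v) with block sizes from the set `K`. -/
def IsTBD (t : ℕ) (K : Set ℕ) (v : ℕ) (X : Finset ℕ) (B : Finset (Finset ℕ)) : Prop :=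
  X.card = v ∧ (∀ b ∈ B, b ⊆ X ∧ b.card ∈ K) ∧
  ∀ T ⊆ X, T.card = t → ∃! b, b ∈ B ∧ T ⊆ b

/-- A group divisible design GDD(t, K, g*n) of type g^n: `Gs` is a partition of
`X` into `n` groups of size `g`; blocks have sizes in `K`, meet every group in
at most one point, and every t-subset of `X` meeting every group in at most one
point lies in exactly one block. -/
def IsGDD (t : ℕ) (K : Set ℕ) (g n : ℕ) (X : Finset ℕ)
    (Gs Bs : Finset (Finset ℕ)) : Prop :=
  X.card = g * n ∧ Gs.card = n ∧
  (∀ G ∈ Gs, G ⊆ X ∧ G.card = g) ∧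
  (∀ x ∈ X, ∃! G, G ∈ Gs ∧ x ∈ G) ∧
  (∀ b ∈ Bs, b ⊆ X ∧ b.card ∈ K) ∧
  (∀ b ∈ Bs, ∀ G ∈ Gs, (b ∩ G).card ≤ 1) ∧
  ∀ T ⊆ X, T.card = t → (∀ G ∈ Gs, (T ∩ G).card ≤ 1) → ∃! b, b ∈ Bs ∧ T ⊆ b

/-- An RDGDD(t, K, g*n) of type g^n: a GDD whose derived design at every point
(on point set `X \ G`, where `G` is the group of the point) is resolvable. -/
def IsRDGDD (t : ℕ) (K : Set ℕ) (g n : ℕ) (X : Finset ℕ)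
    (Gs Bs : Finset (Finset ℕ)) : Prop :=
  IsGDD t K g n X Gs Bs ∧
  ∀ x ∈ X, ∀ G ∈ Gs, x ∈ G → Resolvable (X \ G) (derivedBlocks Bs x)

/-- An RDSQS*(v): an SQS(v) with v ≡ 1 (mod 3) such that, for every point `x`,
the derived blocks at `x` contain a parallel class `P'` (enumerated by `Bk`);
the multiset consisting of each triple of `P'` three times and each remaining
derived triple twice can be partitioned into (v-1) parallel classes
`P k l` (k ranging over Fin ((v-1)/3), l over Fin 3); and for each `k` the three
parallel classes `P k l` share the common triple `Bk k`. -/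
def IsRDSQSstar (v : ℕ) (X : Finset ℕ) (B : Finset (Finset ℕ)) : Prop :=
  IsSteiner 3 4 v X B ∧ v % 3 = 1 ∧
  ∀ x ∈ X, ∃ (P' : Finset (Finset ℕ)) (Bk : Fin ((v - 1) / 3) → Finset ℕ)
    (P : Fin ((v - 1) / 3) → Fin 3 → Finset (Finset ℕ)),
    P' ⊆ derivedBlocks B x ∧
    IsParallelClass (X.erase x) P' ∧
    (∀ k, Bk k ∈ P') ∧
    (∀ b ∈ P', ∃ k, Bk k = b) ∧
    Function.Injective Bk ∧
    (∀ k l, IsParallelClass (X.erase x) (P k l)) ∧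
    ((∑ k, ∑ l, (P k l).val) =
        3 • P'.val + 2 • ((derivedBlocks B x) \ P').val) ∧
    ∀ k l, Bk k ∈ P k l

section helpers

theorem res_fwd (Y : Finset ℕ) (B : Finset (Finset ℕ)) (x : ℕ) (hx : x ∉ Y)
    (h : Resolvable Y (derivedBlocks B x)) :
    ∃ (r : ℕ) (c : Finset ℕ → ℕ), (∀ b ∈ B, x ∈ b → c b < r) ∧
      ∀ y ∈ Y, ∀ i < r, ∃! b, b ∈ B ∧ x ∈ b ∧ y ∈ b ∧ c b = i := by
  classical
  obtain ⟨r, P, hP, hPB, hu⟩ := h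
  have hmem : ∀ b ∈ B, x ∈ b → b.erase x ∈ derivedBlocks B x := by
    intro b hb hxb
    exact mem_image.2 ⟨b, mem_filter.2 ⟨hb, hxb⟩, rfl⟩
  have hu' : ∀ b : Finset ℕ, ∃ i : ℕ, b ∈ B → x ∈ b → ∃ h : i < r, b.erase x ∈ P ⟨i, h⟩ ∧
      ∀ j, b.erase x ∈ P j → j = ⟨i, h⟩ := by
    intro b
    by_cases hb : b ∈ B ∧ x ∈ b
    · obtain ⟨i, hi, hiu⟩ := hu _ (hmem b hb.1 hb.2)
      exact ⟨i, fun _ _ => ⟨i.2, hi, hiu⟩⟩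
    · exact ⟨0, fun h1 h2 => absurd ⟨h1, h2⟩ hb⟩
  choose c hc using hu'
  refine ⟨r, c, fun b hb hxb => (hc b hb hxb).1, ?_⟩
  intro y hy i hi
  obtain ⟨d, ⟨hd, hyd⟩, hdu⟩ := (hP ⟨i, hi⟩).2 y hy
  have hne : y ≠ x := fun h => hx (h ▸ hy)
  obtain ⟨b, hb, rfl⟩ := mem_image.1 (hPB _ hd)
  rw [mem_filter] at hb
  refine ⟨b, ⟨hb.1, hb.2, (mem_erase.1 hyd).2, ?_⟩, ?_⟩
  · obtain ⟨h1, h2, h3⟩ := hc b hb.1 hb.2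
    exact (congrArg Fin.val (h3 _ hd)).symm
  · rintro b' ⟨hb', hxb', hyb', hcb'⟩
    obtain ⟨h1, h2, h3⟩ := hc b' hb' hxb'
    have h4 : b'.erase x ∈ P ⟨i, hi⟩ := by
      have : (⟨c b', h1⟩ : Fin r) = ⟨i, hi⟩ := Fin.ext hcb'
      rwa [this] at h2
    have := hdu _ ⟨h4, mem_erase.2 ⟨hne, hyb'⟩⟩
    rw [← insert_erase hxb', ← insert_erase hb.2]
    exact congrArg _ this

theorem res_bwd {κ : Type*} [DecidableEq κ] (Y : Finset ℕ) (B : Finset (Finset ℕ)) (x : ℕ) (hx : x ∉ Y)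
    (K : Finset κ) (c : Finset ℕ → κ)
    (h1 : ∀ b ∈ B, x ∈ b → b.erase x ⊆ Y) (h2 : ∀ b ∈ B, x ∈ b → c b ∈ K)
    (h3 : ∀ y ∈ Y, ∀ i ∈ K, ∃! b, b ∈ B ∧ x ∈ b ∧ y ∈ b ∧ c b = i) :
    Resolvable Y (derivedBlocks B x) := by
  classical
  refine ⟨K.card, fun i => (B.filter (fun b => x ∈ b ∧ c b = K.equivFin.symm i)).image
    (fun b => b.erase x), ?_, ?_, ?_⟩
  · intro i
    refine ⟨?_, ?_⟩
    · intro d hd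
      obtain ⟨b, hb, rfl⟩ := mem_image.1 hd
      rw [mem_filter] at hb
      exact h1 b hb.1 hb.2.1
    · intro y hy
      obtain ⟨b, ⟨hb, hxb, hyb, hcb⟩, hbu⟩ := h3 y hy _ (K.equivFin.symm i).2
      have hne : y ≠ x := fun h => hx (h ▸ hy)
      refine ⟨b.erase x, ⟨mem_image.2 ⟨b, mem_filter.2 ⟨hb, hxb, hcb⟩, rfl⟩,
        mem_erase.2 ⟨hne, hyb⟩⟩, ?_⟩
      rintro d ⟨hd, hyd⟩
      obtain ⟨b', hb', rfl⟩ := mem_image.1 hd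
      rw [mem_filter] at hb'
      rw [hbu b' ⟨hb'.1, hb'.2.1, (mem_erase.1 hyd).2, hb'.2.2⟩]
  · intro i d hd
    obtain ⟨b, hb, rfl⟩ := mem_image.1 hd
    rw [mem_filter] at hb
    exact mem_image.2 ⟨b, mem_filter.2 ⟨hb.1, hb.2.1⟩, rfl⟩
  · intro d hd
    obtain ⟨b, hb, rfl⟩ := mem_image.1 hd
    rw [mem_filter] at hb
    refine ⟨K.equivFin ⟨c b, h2 b hb.1 hb.2⟩, mem_image.2 ⟨b, mem_filter.2 ⟨hb.1, hb.2, ?_⟩, rfl⟩, ?_⟩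
    · simp
    · intro j hj
      obtain ⟨b', hb', he⟩ := mem_image.1 hj
      rw [mem_filter] at hb'
      have hbb : b' = b := by
        rw [← insert_erase hb'.2.1, ← insert_erase hb.2]
        exact congrArg _ he
      subst hbb
      rw [← Equiv.symm_apply_eq]
      apply Subtype.ext
      exact hb'.2.2.symm

/-- colored design -/
structure Good {α : Type*} [DecidableEq α] (X : Finset α) (g : α → α → Prop)
    (B : Finset (Finset α)) (r : ℕ) (c : α → Finset α → ℕ) : Prop where
  sub : ∀ b ∈ B, b ⊆ X
  crd : ∀ b ∈ B, b.card = 4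
  trv : ∀ b ∈ B, ∀ u ∈ b, ∀ v ∈ b, g u v → u = v
  cov : ∀ T ⊆ X, T.card = 3 → (∀ u ∈ T, ∀ v ∈ T, g u v → u = v) → ∃! b, b ∈ B ∧ T ⊆ b
  clt : ∀ x ∈ X, ∀ b ∈ B, x ∈ b → c x b < r
  res : ∀ x ∈ X, ∀ y ∈ X, ¬ g x y → ∀ i < r, ∃! b, b ∈ B ∧ x ∈ b ∧ y ∈ b ∧ c x b = i

theorem Good.map {α β : Type*} [DecidableEq α] [DecidableEq β] {X : Finset α} {g : α → α → Prop}
    {B : Finset (Finset α)} {r : ℕ} {c : α → Finset α → ℕ} (h : Good X g B r c) (e : α ≃ β) :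
    Good (X.map e.toEmbedding) (fun u v => g (e.symm u) (e.symm v))
      (B.image (fun b => b.map e.toEmbedding)) r
      (fun x b => c (e.symm x) (b.map e.symm.toEmbedding)) := by
  have hmx : ∀ (s : Finset α) (y : β), y ∈ s.map e.toEmbedding ↔ e.symm y ∈ s := by
    intro s y
    simp
  have hback : ∀ s : Finset α, (s.map e.toEmbedding).map e.symm.toEmbedding = s := by
    intro s; ext; simp
  refine ⟨?_, ?_, ?_, ?_, ?_, ?_⟩
  · simp only [forall_mem_image]
    intro b hb
    exact map_subset_map.2 (h.sub b hb)
  · simp only [forall_mem_image]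
    intro b hb
    rw [card_map]; exact h.crd b hb
  · simp only [forall_mem_image]
    intro b hb u hu v hv hg
    rw [hmx] at hu hv
    exact e.symm.injective (h.trv b hb _ hu _ hv hg)
  · intro T hT hTc hTg
    obtain ⟨b, ⟨hb, hTb⟩, hbu⟩ := h.cov (T.map e.symm.toEmbedding) (by
      intro u hu
      simp only [mem_map_equiv, Equiv.symm_symm] at hu
      have := hT hu
      rw [hmx] at this
      simpa using this) (by rw [card_map]; exact hTc) (by
      intro u hu v hv hg
      simp only [mem_map_equiv, Equiv.symm_symm] at hu hv
      exact e.injective (hTg _ hu _ hv (by simpa using hg)))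
    refine ⟨b.map e.toEmbedding, ⟨mem_image_of_mem _ hb, ?_⟩, ?_⟩
    · intro u hu
      rw [hmx]
      exact hTb (by simpa using hu)
    · rintro b' ⟨hb', hTb'⟩
      obtain ⟨b'', hb'', rfl⟩ := mem_image.1 hb'
      rw [hbu b'' ⟨hb'', ?_⟩]
      intro u hu
      simp only [mem_map_equiv, Equiv.symm_symm] at hu
      have := hTb' hu
      rw [hmx] at this
      simpa using this
  · intro x hx
    simp only [forall_mem_image]
    intro b hb hxb
    rw [hmx] at hx hxb
    rw [hback]
    exact h.clt _ hx b hb hxb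
  · intro x hx y hy hg i hi
    rw [hmx] at hx hy
    obtain ⟨b, ⟨hb, hxb, hyb, hcb⟩, hbu⟩ := h.res _ hx _ hy hg i hi
    refine ⟨b.map e.toEmbedding, ⟨mem_image_of_mem _ hb, (hmx _ _).2 hxb, (hmx _ _).2 hyb, ?_⟩, ?_⟩
    · rw [hback]; exact hcb
    · rintro b' ⟨hb', hxb', hyb', hcb'⟩
      obtain ⟨b'', hb'', rfl⟩ := mem_image.1 hb'
      rw [hmx] at hxb' hyb'
      rw [hback] at hcb'
      rw [hbu b'' ⟨hb'', hxb', hyb', hcb'⟩]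

theorem count_lemma {α : Type*} [DecidableEq α] (B : Finset (Finset α)) (Z : Finset α) (p q : α)
    (r : ℕ) (c : Finset α → ℕ) (hpq : p ≠ q) (hp : p ∉ Z) (hq : q ∉ Z)
    (h4 : ∀ b ∈ B, b.card = 4)
    (h0 : ∀ b ∈ B, p ∈ b → q ∈ b → ∀ z ∈ b, z ≠ p → z ≠ q → z ∈ Z)
    (h1 : ∀ z ∈ Z, ∃! b, b ∈ B ∧ p ∈ b ∧ q ∈ b ∧ z ∈ b)
    (h2 : ∀ b ∈ B, p ∈ b → c b < r)
    (h3 : ∀ i < r, ∃! b, b ∈ B ∧ p ∈ b ∧ q ∈ b ∧ c b = i) : Z.card = 2 * r := by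
  classical
  set N := B.filter (fun b => p ∈ b ∧ q ∈ b) with hN
  have hNc : N.card = r := by
    rw [← card_range r]
    apply card_bij (fun b _ => c b)
    · intro b hb
      rw [hN, mem_filter] at hb
      exact mem_range.2 (h2 b hb.1 hb.2.1)
    · intro b hb b' hb' he
      rw [hN, mem_filter] at hb hb'
      exact (h3 (c b) (h2 b hb.1 hb.2.1)).unique ⟨hb.1, hb.2.1, hb.2.2, rfl⟩
        ⟨hb'.1, hb'.2.1, hb'.2.2, he.symm⟩
    · intro i hi
      obtain ⟨b, hb, -⟩ := h3 i (mem_range.1 hi)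
      exact ⟨b, mem_filter.2 ⟨hb.1, hb.2.1, hb.2.2.1⟩, hb.2.2.2⟩
  have := card_mul_eq_card_mul (s := Z) (t := N) (m := 1) (n := 2) (fun z b => z ∈ b) ?_ ?_
  · omega
  · intro z hz
    obtain ⟨b, hb, hbu⟩ := h1 z hz
    rw [card_eq_one]
    refine ⟨b, ?_⟩
    ext b'
    simp only [bipartiteAbove, hN, mem_filter, mem_singleton]
    constructor
    · rintro ⟨⟨a, b, d⟩, e⟩; exact hbu _ ⟨a, b, d, e⟩
    · rintro rfl; tauto
  · intro b hb
    rw [hN, mem_filter] at hb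
    have : Z.bipartiteBelow (fun z b => z ∈ b) b = (b.erase p).erase q := by
      ext z
      simp only [bipartiteBelow, mem_filter, mem_erase]
      constructor
      · rintro ⟨hz, hzb⟩
        exact ⟨fun h => hq (h ▸ hz), fun h => hp (h ▸ hz), hzb⟩
      · rintro ⟨a1, a2, a3⟩
        exact ⟨h0 b hb.1 hb.2.1 hb.2.2 z a3 a2 a1, a3⟩
    rw [this, card_erase_of_mem (mem_erase.2 ⟨hpq.symm, hb.2.2⟩), card_erase_of_mem hb.2.1, h4 b hb.1]

theorem extend_equiv {α : Type} [DecidableEq α] [Countable α] [Infinite α] (X : Finset ℕ) (f : ℕ → α)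
    (hf : Set.InjOn f X) : ∃ e : ℕ ≃ α, ∀ x ∈ X, e x = f x := by
  classical
  let Y := X.image f
  let e1 : {x // x ∈ X} ≃ {y // y ∈ Y} := Equiv.ofBijective (fun x => ⟨f x, mem_image_of_mem f x.2⟩) (by
    constructor
    · intro a b hab
      exact Subtype.ext (hf a.2 b.2 (congrArg Subtype.val hab))
    · rintro ⟨y, hy⟩
      obtain ⟨x, hx, rfl⟩ := mem_image.1 hy
      exact ⟨⟨x, hx⟩, rfl⟩)
  have i1 : Infinite {x // ¬ x ∈ X} := (X.finite_toSet.infinite_compl).to_subtype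
  have i2 : Infinite {x // ¬ x ∈ Y} := (Y.finite_toSet.infinite_compl).to_subtype
  obtain ⟨e2⟩ := nonempty_equiv_of_countable (α := {x // ¬ x ∈ X}) (β := {y // ¬ y ∈ Y})
  refine ⟨(Equiv.sumCompl (· ∈ X)).symm.trans ((e1.sumCongr e2).trans (Equiv.sumCompl (· ∈ Y))), ?_⟩
  intro x hx
  simp [Equiv.sumCompl_symm_apply_of_pos, hx, e1]
  rfl

theorem exists_injOn_to {α β : Type*} [DecidableEq α] [Inhabited β] (S : Finset α) (T : Finset β)
    (h : S.card = T.card) :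
    ∃ f : α → β, Set.InjOn f S ∧ ∀ s ∈ S, f s ∈ T := by
  classical
  let e := Finset.equivOfCardEq h
  refine ⟨fun a => if ha : a ∈ S then e ⟨a, ha⟩ else default, ?_, ?_⟩
  · intro a ha b hb hab
    rw [mem_coe] at ha hb
    simp only [ha, hb, dif_pos] at hab
    exact congrArg Subtype.val (e.injective (Subtype.ext hab))
  · intro a ha
    simp only [ha, dif_pos]
    exact (e ⟨a, ha⟩).2

open Classical in
theorem part_lemma (Y : Finset ℕ) (g : ℕ → ℕ → Prop) (hsym : ∀ u ∈ Y, ∀ v ∈ Y, g u v → g v u)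
    (hrefl : ∀ u ∈ Y, g u u)
    (htr : ∀ u ∈ Y, ∀ v ∈ Y, ∀ w ∈ Y, g u v → g v w → g u w)
    (h3 : ∀ u ∈ Y, {v ∈ Y | g u v}.card = 3) (A : Finset ℕ) (hA : Y.card = 3 * A.card) :
    ∃ f : ℕ → ℕ × Fin 3, Set.InjOn f Y ∧ Y.image f = A ×ˢ univ ∧
      ∀ u ∈ Y, ∀ v ∈ Y, (f u).1 = (f v).1 ↔ g u v := by
  let cls : ℕ → Finset ℕ := fun u => {v ∈ Y | g u v}
  have hcls : ∀ u ∈ Y, ∀ v ∈ Y, cls u = cls v ↔ g u v := by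
    intro u hu v hv
    constructor
    · intro h
      have : v ∈ cls v := mem_filter.2 ⟨hv, hrefl v hv⟩
      rw [← h] at this
      exact (mem_filter.1 this).2
    · intro h
      ext w
      simp only [cls, mem_filter]
      constructor
      · rintro ⟨hw, h'⟩; exact ⟨hw, htr v hv u hu w hw (hsym u hu v hv h) h'⟩
      · rintro ⟨hw, h'⟩; exact ⟨hw, htr u hu v hv w hw h h'⟩
  let Q := Y.image cls
  have hQ : Q.card = A.card := by
    have h1 := card_eq_sum_card_image cls Y
    have h2 : ∑ b ∈ Y.image cls, #{a ∈ Y | cls a = b} = ∑ b ∈ Y.image cls, 3 := by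
      apply sum_congr rfl
      simp only [forall_mem_image]
      intro u hu
      rw [← h3 u hu]
      congr 1
      ext w
      simp only [mem_filter]
      constructor
      · rintro ⟨hw, h⟩; exact ⟨hw, (hcls u hu w hw).1 h.symm⟩
      · rintro ⟨hw, h⟩; exact ⟨hw, ((hcls u hu w hw).2 h).symm⟩
    rw [h2, sum_const, smul_eq_mul] at h1
    have : #(image cls Y) = Q.card := rfl
    omega
  obtain ⟨E, hE1, hE2⟩ := exists_injOn_to Q A hQ
  have hh : ∀ b : Finset ℕ, ∃ h : ℕ → Fin 3, b.card = 3 → Set.InjOn h b := by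
    intro b
    by_cases hb : b.card = 3
    · obtain ⟨h, h1, h2⟩ := exists_injOn_to b (univ : Finset (Fin 3)) (by simpa using hb)
      exact ⟨h, fun _ => h1⟩
    · exact ⟨fun _ => 0, fun h => absurd h hb⟩
  choose h hh using hh
  have hinj : Set.InjOn (fun u => (E (cls u), h (cls u) u)) Y := by
    intro u hu v hv huv
    rw [mem_coe] at hu hv
    simp only [Prod.mk.injEq] at huv
    have h1 : cls u = cls v := hE1 (mem_coe.2 (mem_image_of_mem _ hu)) (mem_coe.2 (mem_image_of_mem _ hv)) huv.1
    have h2 := huv.2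
    rw [← h1] at h2
    exact hh (cls u) (h3 u hu) (mem_coe.2 (mem_filter.2 ⟨hu, hrefl u hu⟩))
      (mem_coe.2 (mem_filter.2 ⟨hv, (hcls u hu v hv).1 h1⟩)) h2
  refine ⟨fun u => (E (cls u), h (cls u) u), hinj, ?_, ?_⟩
  · apply eq_of_subset_of_card_le
    · simp only [image_subset_iff]
      intro u hu
      simp only [mem_product, mem_univ, and_true]
      exact hE2 _ (mem_image_of_mem _ hu)
    · rw [card_image_of_injOn hinj, card_product]
      simp; omega
  · intro u hu v hv
    rw [← hcls u hu v hv]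
    constructor
    · intro h
      exact hE1 (mem_coe.2 (mem_image_of_mem _ hu)) (mem_coe.2 (mem_image_of_mem _ hv)) h
    · intro h
      simp only [h]

abbrev Pt := Option (ℕ × Fin 3)

def pr (o : ℕ) : Pt → ℕ
  | none => o
  | some x => x.1

def grp (a : ℕ) : Finset Pt := insert none (univ.image fun i : Fin 3 => some (a, i))

def pts (o : ℕ) (b : Finset ℕ) : Finset Pt :=
  (if o ∈ b then {none} else ∅) ∪ ((b.erase o) ×ˢ (univ : Finset (Fin 3))).image some

theorem none_mem_grp (a : ℕ) : none ∈ grp a := by simp [grp]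
theorem some_mem_grp (a x : ℕ) (i : Fin 3) : some (x, i) ∈ grp a ↔ x = a := by
  simp only [grp, mem_insert, mem_image, mem_univ, true_and]
  constructor
  · rintro (h | ⟨j, h⟩)
    · cases h
    · simp only [Option.some.injEq, Prod.mk.injEq] at h; exact h.1.symm
  · rintro rfl; right; exact ⟨i, rfl⟩
theorem card_grp (a : ℕ) : (grp a).card = 4 := by
  rw [grp, card_insert_of_notMem (by simp), card_image_of_injective]
  · simp
  · intro i j h; simpa using h
theorem none_mem_pts (o : ℕ) (b : Finset ℕ) : none ∈ pts o b ↔ o ∈ b := by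
  simp only [pts]; split_ifs with h <;> simp [h]
theorem some_mem_pts (o : ℕ) (b : Finset ℕ) (x : ℕ) (i : Fin 3) :
    some (x, i) ∈ pts o b ↔ x ≠ o ∧ x ∈ b := by
  simp only [pts]; split_ifs with h <;> simp
theorem card_pts (o : ℕ) (b : Finset ℕ) (h : o ∈ b) : (pts o b).card = 3 * (b.card - 1) + 1 := by
  rw [pts, if_pos h, card_union_of_disjoint (by simp), card_image_of_injective _ (Option.some_injective _),
    card_product, card_erase_of_mem h]
  simp; omega

theorem Good.perm {α : Type*} [DecidableEq α] {X : Finset α} {g : α → α → Prop}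
    {B : Finset (Finset α)} {r : ℕ} {c : α → Finset α → ℕ} (h : Good X g B r c)
    (σ : α → Equiv.Perm ℕ) (hσ : ∀ x ∈ X, ∀ i, σ x i < r ↔ i < r) :
    Good X g B r (fun x b => σ x (c x b)) := by
  refine ⟨h.sub, h.crd, h.trv, h.cov, ?_, ?_⟩
  · intro x hx b hb hxb
    exact (hσ x hx _).2 (h.clt x hx b hb hxb)
  · intro x hx y hy hg i hi
    have := h.res x hx y hy hg ((σ x).symm i) (by rw [← hσ x hx]; simpa using hi)
    simpa [Equiv.eq_symm_apply] using this

theorem Good.congr_g {α : Type*} [DecidableEq α] {X : Finset α} {g g' : α → α → Prop}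
    {B : Finset (Finset α)} {r : ℕ} {c : α → Finset α → ℕ} (h : Good X g B r c)
    (hg : ∀ x ∈ X, ∀ y ∈ X, g x y ↔ g' x y) : Good X g' B r c := by
  refine ⟨h.sub, h.crd, ?_, ?_, h.clt, ?_⟩
  · intro b hb u hu v hv huv
    exact h.trv b hb u hu v hv ((hg u (h.sub b hb hu) v (h.sub b hb hv)).2 huv)
  · intro T hT hTc hTg
    exact h.cov T hT hTc fun u hu v hv huv => hTg u hu v hv ((hg u (hT hu) v (hT hv)).1 huv)
  · intro x hx y hy hxy
    exact h.res x hx y hy fun h' => hxy ((hg x hx y hy).1 h')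

theorem card_three_subset {α : Type*} [DecidableEq α] {p q z : α} (h1 : p ≠ q) (h2 : p ≠ z) (h3 : q ≠ z) :
    ({p, q, z} : Finset α).card = 3 := by
  rw [card_eq_three]; exact ⟨p, q, z, h1, h2, h3, rfl⟩

theorem sqs_good (k : ℕ) (hk : 0 < k) (h2 : ExistsRDSQS (3 * k + 1)) :
    ∃ (r : ℕ) (X : Finset ℕ) (B : Finset (Finset ℕ)) (c : ℕ → Finset ℕ → ℕ),
      2 * r + 1 = 3 * k ∧ X.card = 3 * k + 1 ∧ Good X (fun x y => x = y) B r c := by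
  classical
  obtain ⟨X, B, ⟨hX, hB, hcov⟩, hres⟩ := h2
  have key : ∀ x, ∃ (r : ℕ) (c : Finset ℕ → ℕ), x ∈ X → 2 * r + 1 = 3 * k ∧
      (∀ b ∈ B, x ∈ b → c b < r) ∧
      ∀ y ∈ X.erase x, ∀ i < r, ∃! b, b ∈ B ∧ x ∈ b ∧ y ∈ b ∧ c b = i := by
    intro x
    by_cases hx : x ∈ X
    swap
    · exact ⟨0, fun _ => 0, fun h => absurd h hx⟩
    obtain ⟨r, c, hc1, hc2⟩ := res_fwd _ _ _ (notMem_erase x X) (hres x hx)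
    refine ⟨r, c, fun _ => ⟨?_, hc1, hc2⟩⟩
    have hcard : (X.erase x).card = 3 * k := by rw [card_erase_of_mem hx, hX]; omega
    obtain ⟨q, hq⟩ : (X.erase x).Nonempty := by rw [← card_pos]; omega
    have hqx := (mem_erase.1 hq).1
    have hqX := (mem_erase.1 hq).2
    have := count_lemma B ((X.erase x).erase q) x q r c hqx.symm (by simp) (by simp)
      (fun b hb => (hB b hb).2)
      (fun b hb hxb hqb z hz hzx hzq => mem_erase.2 ⟨hzq, mem_erase.2 ⟨hzx, (hB b hb).1 hz⟩⟩)
      (fun z hz => by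
        simp only [mem_erase] at hz
        have := hcov {x, q, z} (by
          intro w hw; simp only [mem_insert, mem_singleton] at hw
          rcases hw with rfl | rfl | rfl
          · exact hx
          · exact hqX
          · exact hz.2.2) (card_three_subset hqx.symm (Ne.symm hz.2.1) (Ne.symm hz.1))
        simpa [insert_subset_iff] using this)
      hc1 (fun i hi => hc2 q hq i hi)
    rw [card_erase_of_mem hq] at this
    omega
  choose r c h using key
  obtain ⟨x0, hx0⟩ : X.Nonempty := by rw [← card_pos]; omega
  have hr : ∀ x ∈ X, r x = r x0 := by
    intro x hx
    have h1 := (h x hx).1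
    have h2 := (h x0 hx0).1
    omega
  refine ⟨r x0, X, B, c, (h x0 hx0).1, hX, fun b hb => (hB b hb).1, fun b hb => (hB b hb).2,
    fun _ _ _ _ _ _ h => h, fun T hT hTc _ => hcov T hT hTc, ?_, ?_⟩
  · intro x hx b hb hxb
    rw [← hr x hx]; exact (h x hx).2.1 b hb hxb
  · intro x hx y hy hxy i hi
    exact (h x hx).2.2 y (mem_erase.2 ⟨Ne.symm hxy, hy⟩) i (by rw [hr x hx]; exact hi)

open Classical in
theorem gdd_good (k : ℕ) (hk : 0 < k) (h3 : ∃ X Gs Bs, IsRDGDD 3 {4} 3 (k + 1) X Gs Bs) :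
    ∃ (r : ℕ) (X : Finset ℕ) (g : ℕ → ℕ → Prop) (B : Finset (Finset ℕ)) (c : ℕ → Finset ℕ → ℕ),
      2 * r + 3 = 3 * k ∧ X.card = 3 * (k + 1) ∧ 
      (∀ u ∈ X, ∀ v ∈ X, g u v → g v u) ∧
      (∀ u ∈ X, g u u) ∧
      (∀ u ∈ X, ∀ v ∈ X, ∀ w ∈ X, g u v → g v w → g u w) ∧
      (∀ u ∈ X, {v ∈ X | g u v}.card = 3) ∧ Good X g B r c := by
  obtain ⟨X, Gs, B, ⟨hX, hGs, hG3, hGp, hB, hBG, hcov⟩, hres⟩ := h3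
  let g : ℕ → ℕ → Prop := fun u v => ∃ G ∈ Gs, u ∈ G ∧ v ∈ G
  have hg : ∀ u ∈ X, ∀ G ∈ Gs, u ∈ G → ∀ v, g u v ↔ v ∈ G := by
    intro u hu G hG huG v
    constructor
    · rintro ⟨G', hG', h1, h2⟩
      rwa [(hGp u hu).unique ⟨hG, huG⟩ ⟨hG', h1⟩]
    · intro hv; exact ⟨G, hG, huG, hv⟩
  have hsym : ∀ u v, g u v → g v u := by
    rintro u v ⟨G, h1, h2, h3⟩; exact ⟨G, h1, h3, h2⟩
  have htr : ∀ b : Finset ℕ, b ⊆ X → ((∀ G ∈ Gs, (b ∩ G).card ≤ 1) ↔ ∀ u ∈ b, ∀ v ∈ b, g u v → u = v) := by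
    intro b hb
    constructor
    · rintro h u hu v hv ⟨G, hG, h1, h2⟩
      exact card_le_one.1 (h G hG) u (mem_inter.2 ⟨hu, h1⟩) v (mem_inter.2 ⟨hv, h2⟩)
    · intro h G hG
      rw [card_le_one]
      intro u hu v hv
      rw [mem_inter] at hu hv
      exact h u hu.1 v hv.1 ⟨G, hG, hu.2, hv.2⟩
  have hBt : ∀ b ∈ B, ∀ u ∈ b, ∀ v ∈ b, g u v → u = v := fun b hb =>
    (htr b (hB b hb).1).1 (hBG b hb)
  have hrefl : ∀ u ∈ X, g u u := by
    intro u hu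
    obtain ⟨G, ⟨h1, h2⟩, -⟩ := hGp u hu
    exact ⟨G, h1, h2, h2⟩
  have key : ∀ x, ∃ (r : ℕ) (c : Finset ℕ → ℕ), x ∈ X → 2 * r + 3 = 3 * k ∧
      (∀ b ∈ B, x ∈ b → c b < r) ∧
      ∀ y ∈ X, ¬ g x y → ∀ i < r, ∃! b, b ∈ B ∧ x ∈ b ∧ y ∈ b ∧ c b = i := by
    intro x
    by_cases hx : x ∈ X
    swap
    · exact ⟨0, fun _ => 0, fun h => absurd h hx⟩
    obtain ⟨G, ⟨hG, hxG⟩, -⟩ := hGp x hx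
    obtain ⟨r, c, hc1, hc2⟩ := res_fwd (X \ G) B x (by simp [hxG]) (hres x hx G hG hxG)
    have hc2' : ∀ y ∈ X, ¬ g x y → ∀ i < r, ∃! b, b ∈ B ∧ x ∈ b ∧ y ∈ b ∧ c b = i := by
      intro y hy hxy
      rw [hg x hx G hG hxG] at hxy
      exact hc2 y (mem_sdiff.2 ⟨hy, hxy⟩)
    refine ⟨r, c, fun _ => ⟨?_, hc1, hc2'⟩⟩
    have hcard : (X \ G).card = 3 * k := by
      rw [card_sdiff_of_subset (hG3 G hG).1, hX, (hG3 G hG).2]; omega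
    obtain ⟨q, hq⟩ : (X \ G).Nonempty := by rw [← card_pos]; omega
    have hqX := (mem_sdiff.1 hq).1
    have hqG := (mem_sdiff.1 hq).2
    have hqx : q ≠ x := fun h => hqG (h ▸ hxG)
    obtain ⟨H, ⟨hH, hqH⟩, -⟩ := hGp q hqX
    have hgx := hg x hx G hG hxG
    have hgq := hg q hqX H hH hqH
    have hdis : H ⊆ X \ G := by
      intro w hw
      refine mem_sdiff.2 ⟨(hG3 H hH).1 hw, fun hwG => hqG ?_⟩
      rw [(hGp w ((hG3 H hH).1 hw)).unique ⟨hG, hwG⟩ ⟨hH, hw⟩]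
      exact hqH
    have := count_lemma B ((X \ G) \ H) x q r c hqx.symm (by simp [hxG]) (by simp [hqH])
      (fun b hb => (hB b hb).2)
      (fun b hb hxb hqb z hz hzx hzq => by
        simp only [mem_sdiff]
        refine ⟨⟨(hB b hb).1 hz, ?_⟩, ?_⟩
        · rw [← hgx]; exact fun h => hzx (hBt b hb x hxb z hz h).symm
        · rw [← hgq]; exact fun h => hzq (hBt b hb q hqb z hz h).symm)
      (fun z hz => by
        simp only [mem_sdiff] at hz
        have a1 : ¬ g x q := by rw [hgx]; exact hqG
        have a2 : ¬ g x z := by rw [hgx]; exact hz.1.2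
        have a3 : ¬ g q z := by rw [hgq]; exact hz.2
        have a1' : ¬ g q x := fun h => a1 (hsym _ _ h)
        have a2' : ¬ g z x := fun h => a2 (hsym _ _ h)
        have a3' : ¬ g z q := fun h => a3 (hsym _ _ h)
        have hsub : ({x, q, z} : Finset ℕ) ⊆ X := by
          intro w hw; simp only [mem_insert, mem_singleton] at hw
          rcases hw with rfl | rfl | rfl
          · exact hx
          · exact hqX
          · exact hz.1.1
        have := hcov {x, q, z} hsub (card_three_subset hqx.symm
          (fun h => a2 (h ▸ hrefl x hx)) (fun h => a3 (h ▸ hrefl q hqX))) (by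
            rw [htr _ hsub]
            intro u hu v hv huv
            simp only [mem_insert, mem_singleton] at hu hv
            rcases hu with rfl | rfl | rfl <;> rcases hv with rfl | rfl | rfl <;>
              first | rfl | contradiction)
        simpa [insert_subset_iff] using this)
      hc1 (fun i hi => hc2 q hq i hi)
    rw [card_sdiff_of_subset hdis, (hG3 H hH).2] at this
    omega
  choose r c h using key
  obtain ⟨x0, hx0⟩ : X.Nonempty := by rw [← card_pos]; omega
  have hr : ∀ x ∈ X, r x = r x0 := by
    intro x hx
    have h1 := (h x hx).1
    have h2 := (h x0 hx0).1
    omega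
  refine ⟨r x0, X, g, B, c, (h x0 hx0).1, hX, fun u _ v _ => hsym u v, hrefl, ?_, ?_, 
    fun b hb => (hB b hb).1, fun b hb => (hB b hb).2,
    hBt, fun T hT hTc hTg => hcov T hT hTc ((htr T hT).2 hTg), ?_, ?_⟩
  · rintro u hu v hv w hw ⟨G, hG, h1, h2⟩ h3
    rw [hg u hu G hG h1]
    rwa [hg v hv G hG h2] at h3
  · intro u hu
    obtain ⟨G, ⟨hG, huG⟩, -⟩ := hGp u hu
    rw [← (hG3 G hG).2]
    congr 1
    ext w
    simp only [mem_filter, hg u hu G hG huG]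
    exact ⟨fun h => h.2, fun h => ⟨(hG3 G hG).1 h, h⟩⟩
  · intro x hx b hb hxb
    rw [← hr x hx]; exact (h x hx).2.1 b hb hxb
  · intro x hx y hy hxy i hi
    exact (h x hx).2.2 y hy hxy i (by rw [hr x hx]; exact hi)

theorem sqs_local (k M : ℕ) (X : Finset ℕ) (B : Finset (Finset ℕ)) (c : ℕ → Finset ℕ → ℕ)
    (hX : X.card = 3 * k + 1) (hG : Good X (fun x y => x = y) B (M + 1) c)
    (o : ℕ) (b : Finset ℕ) (ho : o ∈ b) (hb : b.card = k + 1) :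
    ∃ (D : Finset (Finset Pt)) (d : Pt → Finset Pt → ℕ),
      Good (pts o b) (fun x y => x = y) D (M + 1) d ∧ (∀ a ∈ b, a ≠ o → grp a ∈ D) ∧
      ∀ p ∈ pts o b, ∀ a ∈ b, a ≠ o → p ∈ grp a → d p (grp a) = M := by
  classical
  obtain ⟨p0, hp0⟩ : X.Nonempty := by rw [← card_pos]; omega
  obtain ⟨g, hg⟩ : ∃ g : ℕ → ℕ → Prop, ∀ u v, g u v ↔ ∃ s ∈ B, p0 ∈ s ∧ c p0 s = 0 ∧ u ∈ s ∧ v ∈ s :=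
    ⟨_, fun _ _ => Iff.rfl⟩
  have hblk : ∀ u ∈ X.erase p0, ∃ s ∈ B, p0 ∈ s ∧ c p0 s = 0 ∧ u ∈ s ∧ ∀ v, g u v ↔ v ∈ s := by
    intro u hu
    rw [mem_erase] at hu
    obtain ⟨s, ⟨h1, h2, h3, h4⟩, hsu⟩ := hG.res p0 hp0 u hu.2 (Ne.symm hu.1) 0 (Nat.succ_pos _)
    refine ⟨s, h1, h2, h4, h3, fun v => ?_⟩
    rw [hg]
    constructor
    · rintro ⟨s', a1, a2, a3, a4, a5⟩
      rwa [hsu s' ⟨a1, a2, a4, a3⟩] at a5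
    · intro hv; exact ⟨s, h1, h2, h4, h3, hv⟩
  have hAc : (b.erase o).card = k := by rw [card_erase_of_mem ho, hb]; rfl
  obtain ⟨f, hf1, hf2, hf3⟩ := part_lemma (X.erase p0) g
    (by intro u _ v _ h; rw [hg] at h ⊢; obtain ⟨s, a, b, c, d, e⟩ := h; exact ⟨s, a, b, c, e, d⟩)
    (by intro u hu; obtain ⟨s, -, -, -, h1, h2⟩ := hblk u hu; exact (h2 u).2 h1)
    (by
      intro u hu v hv w hw h1 h2
      obtain ⟨s, -, -, -, a1, a2⟩ := hblk u hu
      obtain ⟨s', -, -, -, b1, b2⟩ := hblk v hv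
      have : u ∈ s' := (b2 u).1 (by
        rw [hg] at h1 ⊢; obtain ⟨s, a, b, c, d, e⟩ := h1; exact ⟨s, a, b, c, e, d⟩)
      have h3 : g u w := by
        rw [hg] at h2 ⊢
        obtain ⟨t, t1, t2, t3, t4, t5⟩ := h2
        refine ⟨t, t1, t2, t3, ?_, t5⟩
        rw [hg] at h1
        obtain ⟨t', r1, r2, r3, r4, r5⟩ := h1
        rw [mem_erase] at hv
        rwa [(hG.res p0 hp0 v hv.2 (Ne.symm hv.1) 0 (Nat.succ_pos _)).unique ⟨t1, t2, t4, t3⟩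
          ⟨r1, r2, r5, r3⟩]
      exact h3)
    (by
      intro u hu
      obtain ⟨s, hs, h1, -, h2, h3⟩ := hblk u hu
      have : {v ∈ X.erase p0 | g u v} = s.erase p0 := by
        ext w
        simp only [mem_filter, mem_erase, h3]
        exact ⟨fun h => ⟨h.1.1, h.2⟩, fun h => ⟨⟨h.1, hG.sub s hs h.2⟩, h.2⟩⟩
      rw [this, card_erase_of_mem h1, hG.crd s hs])
    (b.erase o) (by rw [card_erase_of_mem hp0, hX, hAc]; rfl)
  obtain ⟨e, he⟩ := extend_equiv X (fun u => if u = p0 then (none : Pt) else some (f u)) (by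
    intro u hu v hv huv
    rw [mem_coe] at hu hv
    simp only at huv
    by_cases h1 : u = p0 <;> by_cases h2 : v = p0
    · rw [h1, h2]
    · simp [h1, h2] at huv
    · simp [h1, h2] at huv
    · simp only [h1, h2, if_false, Option.some.injEq] at huv
      exact hf1 (by simp [h1, hu]) (by simp [h2, hv]) huv)
  have he0 : e p0 = none := by rw [he p0 hp0]; simp
  have he1 : ∀ u ∈ X, u ≠ p0 → e u = some (f u) := by
    intro u hu h; rw [he u hu]; simp [h]
  have hXm : X.map e.toEmbedding = pts o b := by
    rw [← insert_erase hp0, map_insert]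
    have : (X.erase p0).map e.toEmbedding = ((X.erase p0).image f).image some := by
      rw [map_eq_image, image_image]
      apply image_congr
      intro u hu
      rw [mem_coe, mem_erase] at hu
      exact he1 u hu.2 hu.1
    rw [this, hf2]
    simp only [pts, if_pos ho, Equiv.coe_toEmbedding, he0]
    rfl
  have hgrp : ∀ a ∈ b, a ≠ o → ∃ s ∈ B, p0 ∈ s ∧ c p0 s = 0 ∧ s.map e.toEmbedding = grp a := by
    intro a ha hao
    have : (a, (0 : Fin 3)) ∈ (X.erase p0).image f := by
      rw [hf2]; simp [ha, hao]
    obtain ⟨u, hu, hfu⟩ := mem_image.1 this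
    obtain ⟨s, hs, h1, h0, h2, h3⟩ := hblk u hu
    refine ⟨s, hs, h1, h0, ?_⟩
    apply eq_of_subset_of_card_le
    · intro w hw
      obtain ⟨v, hv, rfl⟩ := mem_map.1 hw
      by_cases hvp : v = p0
      · subst hvp
        rw [Equiv.coe_toEmbedding, he0]; exact none_mem_grp a
      · have hvX := hG.sub s hs hv
        rw [Equiv.coe_toEmbedding, he1 v hvX hvp]
        have := (hf3 u hu v (mem_erase.2 ⟨hvp, hvX⟩)).2 ((h3 v).2 hv)
        rw [hfu] at this
        rcases hq : f v with ⟨x, i⟩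
        rw [hq] at this
        rw [some_mem_grp]
        exact this.symm
    · rw [card_map, card_grp, hG.crd s hs]
  have hGm := hG.map e
  rw [hXm] at hGm
  have hGm' := hGm.congr_g (g' := fun x y => x = y) (fun x _ y _ => by simp)
  have hback : ∀ s : Finset ℕ, (s.map e.toEmbedding).map e.symm.toEmbedding = s := by
    intro s; ext; simp
  set D := B.image (fun b => b.map e.toEmbedding) with hD
  set d : Pt → Finset Pt → ℕ := fun x b => c (e.symm x) (b.map e.symm.toEmbedding) with hd
  have hgD : ∀ a ∈ b, a ≠ o → grp a ∈ D := by
    intro a ha hao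
    obtain ⟨s, hs, -, -, h⟩ := hgrp a ha hao
    exact mem_image.2 ⟨s, hs, h⟩
  have hd0 : ∀ a ∈ b, a ≠ o → d none (grp a) = 0 := by
    intro a ha hao
    obtain ⟨s, hs, h1, h0, h⟩ := hgrp a ha hao
    simp only [hd]
    rw [← h, hback, ← he0, Equiv.symm_apply_apply, h0]
  let γ : Pt → ℕ := fun p => match p with
    | none => 0
    | some x => d (some x) (grp x.1)
  have hγ : ∀ p ∈ pts o b, γ p < M + 1 := by
    rintro (_ | ⟨x, i⟩) hp
    · exact Nat.succ_pos _
    · have hp' := (some_mem_pts _ _ _ _).1 hp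
      exact hGm'.clt _ hp _ (hgD x hp'.2 hp'.1) ((some_mem_grp _ _ _).2 rfl)
  refine ⟨D, _, hGm'.perm (fun p => Equiv.swap (γ p) M) ?_, hgD, ?_⟩
  · intro p hp i
    have := hγ p hp
    rw [Equiv.swap_apply_def]
    split_ifs <;> omega
  · rintro (_ | ⟨x, i⟩) hp a ha hao hpa
    · simp only [hd0 a ha hao, γ]
      exact Equiv.swap_apply_left _ _
    · rw [some_mem_grp] at hpa
      subst hpa
      exact Equiv.swap_apply_left _ _

open Classical in
theorem gdd_local (k M : ℕ) (X : Finset ℕ) (g : ℕ → ℕ → Prop) (B : Finset (Finset ℕ)) (c : ℕ → Finset ℕ → ℕ)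
    (hX : X.card = 3 * (k + 1))
    (hsym : ∀ u ∈ X, ∀ v ∈ X, g u v → g v u)
    (hrefl : ∀ u ∈ X, g u u)
    (htr : ∀ u ∈ X, ∀ v ∈ X, ∀ w ∈ X, g u v → g v w → g u w)
    (h3 : ∀ u ∈ X, {v ∈ X | g u v}.card = 3) (hG : Good X g B M c)
    (o : ℕ) (b : Finset ℕ) (ho : o ∉ b) (hb : b.card = k + 1) :
    ∃ (D : Finset (Finset Pt)) (d : Pt → Finset Pt → ℕ),
      Good (pts o b) (fun x y => pr o x = pr o y) D M d := by
  obtain ⟨f, hf1, hf2, hf3⟩ := part_lemma X g hsym hrefl htr h3 b (by rw [hX, hb])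
  obtain ⟨e, he⟩ := extend_equiv X (fun u => (some (f u) : Pt)) (by
    intro u hu v hv huv
    exact hf1 hu hv (Option.some_injective _ huv))
  have hXm : X.map e.toEmbedding = pts o b := by
    have : X.map e.toEmbedding = (X.image f).image some := by
      rw [map_eq_image, image_image]
      apply image_congr
      intro u hu
      exact he u hu
    rw [this, hf2]
    simp [pts, ho]
  have hGm := hG.map e
  rw [hXm] at hGm
  refine ⟨_, _, hGm.congr_g ?_⟩
  rw [← hXm]
  simp only [forall_mem_map]
  intro u hu v hv
  simp only [Equiv.coe_toEmbedding, Equiv.symm_apply_apply]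
  rw [← hf3 u hu v hv, he u hu, he v hv]
  rfl

theorem final_transfer {κ : Type} [DecidableEq κ] (v : ℕ) (V : Finset Pt) (E : Finset (Finset Pt)) (hV : V.card = v)
    (h1 : ∀ s ∈ E, s ⊆ V ∧ s.card = 4)
    (h2 : ∀ T ⊆ V, T.card = 3 → ∃! s, s ∈ E ∧ T ⊆ s)
    (h3 : ∀ p ∈ V, ∃ (K : Finset κ) (c : Finset Pt → κ), (∀ s ∈ E, p ∈ s → c s ∈ K) ∧
      ∀ q ∈ V, q ≠ p → ∀ i ∈ K, ∃! s, s ∈ E ∧ p ∈ s ∧ q ∈ s ∧ c s = i) : ExistsRDSQS v := by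
  obtain ⟨e⟩ := nonempty_equiv_of_countable (α := Pt) (β := ℕ)
  have hmx : ∀ (s : Finset Pt) (y : ℕ), y ∈ s.map e.toEmbedding ↔ e.symm y ∈ s := by
    intro s y
    simp
  have hback : ∀ s : Finset Pt, (s.map e.toEmbedding).map e.symm.toEmbedding = s := by
    intro s; ext; simp
  refine ⟨V.map e.toEmbedding, E.image (fun b => b.map e.toEmbedding), ⟨?_, ?_, ?_⟩, ?_⟩
  · rw [card_map, hV]
  · simp only [forall_mem_image]
    intro b hb
    exact ⟨map_subset_map.2 (h1 b hb).1, by rw [card_map]; exact (h1 b hb).2⟩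
  · intro T hT hTc
    obtain ⟨b, ⟨hb, hTb⟩, hbu⟩ := h2 (T.map e.symm.toEmbedding) (by
      intro u hu
      simp only [mem_map_equiv, Equiv.symm_symm] at hu
      have := hT hu
      rw [hmx] at this
      simpa using this) (by rw [card_map]; exact hTc)
    refine ⟨b.map e.toEmbedding, ⟨mem_image_of_mem _ hb, ?_⟩, ?_⟩
    · intro u hu
      rw [hmx]
      exact hTb (by simpa using hu)
    · rintro b' ⟨hb', hTb'⟩
      obtain ⟨b'', hb'', rfl⟩ := mem_image.1 hb'
      rw [hbu b'' ⟨hb'', ?_⟩]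
      intro u hu
      simp only [mem_map_equiv, Equiv.symm_symm] at hu
      have := hTb' hu
      rw [hmx] at this
      simpa using this
  · intro x hx
    rw [hmx] at hx
    obtain ⟨K, c, hc1, hc2⟩ := h3 _ hx
    refine res_bwd _ _ _ (notMem_erase _ _) K (fun s => c (s.map e.symm.toEmbedding)) ?_ ?_ ?_
    · simp only [forall_mem_image]
      intro b hb hxb
      exact erase_subset_erase _ (map_subset_map.2 (h1 b hb).1)
    · simp only [forall_mem_image]
      intro b hb hxb
      rw [hback]
      rw [hmx] at hxb
      exact hc1 b hb hxb
    · intro y hy i hi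
      rw [mem_erase, hmx] at hy
      obtain ⟨b, ⟨hb, hxb, hyb, hcb⟩, hbu⟩ := hc2 _ hy.2 (by simpa using hy.1) i hi
      refine ⟨b.map e.toEmbedding, ⟨mem_image_of_mem _ hb, (hmx _ _).2 hxb, (hmx _ _).2 hyb, ?_⟩, ?_⟩
      · rw [hback]; exact hcb
      · rintro b' ⟨hb', hxb', hyb', hcb'⟩
        obtain ⟨b'', hb'', rfl⟩ := mem_image.1 hb'
        rw [hmx] at hxb' hyb'
        rw [hback] at hcb'
        rw [hbu b'' ⟨hb'', hxb', hyb', hcb'⟩]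

structure Loc (o M : ℕ) (b : Finset ℕ) (F : Finset (Finset Pt)) (c : Pt → Finset Pt → ℕ) : Prop where
  sub : ∀ s ∈ F, s ⊆ pts o b
  crd : ∀ s ∈ F, s.card = 4
  ng : ∀ s ∈ F, ∀ T ⊆ s, T.card = 3 → ∀ a, ¬ T ⊆ grp a
  cle : ∀ p ∈ pts o b, ∀ s ∈ F, p ∈ s → c p s ≤ M
  covA : o ∈ b → ∀ T ⊆ pts o b, T.card = 3 → (∀ a, ¬ T ⊆ grp a) → ∃! s, s ∈ F ∧ T ⊆ s
  resA : o ∈ b → ∀ p ∈ pts o b, ∀ q ∈ pts o b, q ≠ p → ∀ m < M,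
    ∃! s, s ∈ F ∧ p ∈ s ∧ q ∈ s ∧ c p s = m
  resM : o ∈ b → ∀ p ∈ pts o b, ∀ q ∈ pts o b, (∀ a, ¬ (p ∈ grp a ∧ q ∈ grp a)) →
    ∃! s, s ∈ F ∧ p ∈ s ∧ q ∈ s ∧ c p s = M
  resM' : o ∈ b → ∀ s ∈ F, ∀ p ∈ s, ∀ q ∈ s, q ≠ p → ∀ a, p ∈ grp a → q ∈ grp a → c p s ≠ M
  trv : o ∉ b → ∀ s ∈ F, ∀ u ∈ s, ∀ v ∈ s, pr o u = pr o v → u = v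
  covB : o ∉ b → ∀ T ⊆ pts o b, T.card = 3 → (∀ u ∈ T, ∀ v ∈ T, pr o u = pr o v → u = v) →
    ∃! s, s ∈ F ∧ T ⊆ s
  resB : o ∉ b → ∀ p ∈ pts o b, ∀ q ∈ pts o b, pr o p ≠ pr o q → ∀ m < M,
    ∃! s, s ∈ F ∧ p ∈ s ∧ q ∈ s ∧ c p s = m
  cltB : o ∉ b → ∀ p ∈ pts o b, ∀ s ∈ F, p ∈ s → c p s < M

theorem mem_grp_pts {o a : ℕ} {b : Finset ℕ} {p q : Pt} (hp : p ∈ pts o b) (hq : q ∈ pts o b) (hpq : q ≠ p)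
    (hpa : p ∈ grp a) (hqa : q ∈ grp a) : a ∈ b ∧ a ≠ o := by
  rcases p with _ | ⟨x, i⟩
  · rcases q with _ | ⟨y, j⟩
    · exact absurd rfl hpq
    · rw [some_mem_grp] at hqa
      rw [some_mem_pts] at hq
      subst hqa; exact hq.symm
  · rw [some_mem_grp] at hpa
    rw [some_mem_pts] at hp
    subst hpa; exact hp.symm

theorem grp_unique {a a' : ℕ} {p q : Pt} (hpq : q ≠ p)
    (hpa : p ∈ grp a) (hqa : q ∈ grp a) (hpa' : p ∈ grp a') (hqa' : q ∈ grp a') : a = a' := by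
  rcases p with _ | ⟨x, i⟩
  · rcases q with _ | ⟨y, j⟩
    · exact absurd rfl hpq
    · rw [some_mem_grp] at hqa hqa'
      rw [← hqa, ← hqa']
  · rw [some_mem_grp] at hpa hpa'
    rw [← hpa, ← hpa']

theorem mem_pts_of_pr {o : ℕ} {b X : Finset ℕ} {p : Pt} (hp : p ∈ pts o X) (h : pr o p ∈ b) : p ∈ pts o b := by
  rcases p with _ | ⟨x, i⟩
  · rw [none_mem_pts]; exact h
  · rw [some_mem_pts] at hp ⊢; exact ⟨hp.1, h⟩

theorem pr_mem {o : ℕ} {b : Finset ℕ} {p : Pt} (hp : p ∈ pts o b) : pr o p ∈ b := by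
  rcases p with _ | ⟨x, i⟩
  · rw [none_mem_pts] at hp; exact hp
  · rw [some_mem_pts] at hp; exact hp.2

/-- two distinct valid points with the same projection lie in a group and the projection is not o -/
theorem same_pr {o : ℕ} {X : Finset ℕ} {p q : Pt} (hp : p ∈ pts o X) (hq : q ∈ pts o X) (hpq : q ≠ p)
    (h : pr o p = pr o q) : pr o p ≠ o ∧ p ∈ grp (pr o p) ∧ q ∈ grp (pr o p) := by
  rcases p with _ | ⟨x, i⟩
  · rcases q with _ | ⟨y, j⟩
    · exact absurd rfl hpq
    · rw [some_mem_pts] at hq; exact absurd h.symm hq.1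
  · rcases q with _ | ⟨y, j⟩
    · rw [some_mem_pts] at hp; exact absurd h hp.1
    · rw [some_mem_pts] at hp
      refine ⟨hp.1, ?_, ?_⟩
      · exact (some_mem_grp _ _ _).2 rfl
      · exact (some_mem_grp _ _ _).2 h.symm

theorem not_grp {o : ℕ} {X : Finset ℕ} {p q : Pt} (hp : p ∈ pts o X) (hq : q ∈ pts o X)
    (h : ∀ a, ¬ (p ∈ grp a ∧ q ∈ grp a)) : pr o p ≠ o ∧ pr o q ≠ o ∧ pr o p ≠ pr o q := by
  rcases p with _ | ⟨x, i⟩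
  · rcases q with _ | ⟨y, j⟩
    · exact absurd ⟨none_mem_grp 0, none_mem_grp 0⟩ (h 0)
    · exact absurd ⟨none_mem_grp y, (some_mem_grp _ _ _).2 rfl⟩ (h y)
  · rcases q with _ | ⟨y, j⟩
    · exact absurd ⟨(some_mem_grp _ _ _).2 rfl, none_mem_grp x⟩ (h x)
    · rw [some_mem_pts] at hp hq
      refine ⟨hp.1, hq.1, fun hxy => h x ⟨(some_mem_grp _ _ _).2 rfl, (some_mem_grp _ _ _).2 hxy.symm⟩⟩

theorem two_of_three {α : Type*} [DecidableEq α] {T : Finset α} (hT : T.card = 3) :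
    ∃ u ∈ T, ∃ v ∈ T, v ≠ u := by
  obtain ⟨a, b, c, h1, h2, h3, rfl⟩ := card_eq_three.1 hT
  exact ⟨a, by simp, b, by simp, h1.symm⟩

theorem loc_sqs {o M : ℕ} {b : Finset ℕ} {D : Finset (Finset Pt)} {d : Pt → Finset Pt → ℕ} (ho : o ∈ b)
    (hG : Good (pts o b) (fun x y => x = y) D (M + 1) d) (hgD : ∀ a ∈ b, a ≠ o → grp a ∈ D)
    (hgM : ∀ p ∈ pts o b, ∀ a ∈ b, a ≠ o → p ∈ grp a → d p (grp a) = M) :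
    ∃ F c, Loc o M b F c := by
  classical
  have hF : ∀ s, s ∈ D.filter (fun s => ∀ a, s ≠ grp a) ↔ s ∈ D ∧ ∀ a, s ≠ grp a := fun s => mem_filter
  refine ⟨D.filter (fun s => ∀ a, s ≠ grp a), d, ?_, ?_, ?_, ?_, ?_, ?_, ?_, ?_, ?_, ?_, ?_, ?_⟩
  · intro s hs; exact hG.sub s ((hF s).1 hs).1
  · intro s hs; exact hG.crd s ((hF s).1 hs).1
  · intro s hs T hTs hT a hTa
    obtain ⟨hs, hsg⟩ := (hF s).1 hs
    have hTp := hTs.trans (hG.sub s hs)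
    obtain ⟨u, hu, v, hv, huv⟩ := two_of_three hT
    obtain ⟨h1, h2⟩ := mem_grp_pts (hTp hu) (hTp hv) huv (hTa hu) (hTa hv)
    exact hsg a ((hG.cov T hTp hT (fun _ _ _ _ h => h)).unique ⟨hs, hTs⟩ ⟨hgD a h1 h2, hTa⟩)
  · intro p hp s hs hps
    exact Nat.lt_succ_iff.1 (hG.clt p hp s ((hF s).1 hs).1 hps)
  · intro _ T hT hTc hTg
    obtain ⟨s, ⟨hs, hTs⟩, hu⟩ := hG.cov T hT hTc (fun _ _ _ _ h => h)
    refine ⟨s, ⟨(hF s).2 ⟨hs, fun a ha => hTg a (ha ▸ hTs)⟩, hTs⟩, ?_⟩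
    rintro s' ⟨hs', h'⟩
    exact hu s' ⟨((hF s').1 hs').1, h'⟩
  · intro _ p hp q hq hqp m hm
    obtain ⟨s, ⟨hs, hps, hqs, hc⟩, hu⟩ := hG.res p hp q hq hqp.symm m (by omega)
    refine ⟨s, ⟨(hF s).2 ⟨hs, ?_⟩, hps, hqs, hc⟩, ?_⟩
    · rintro a rfl
      obtain ⟨h1, h2⟩ := mem_grp_pts hp hq hqp hps hqs
      have := hgM p hp a h1 h2 hps
      omega
    · rintro s' ⟨hs', h'⟩
      exact hu s' ⟨((hF s').1 hs').1, h'⟩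
  · intro _ p hp q hq hpq
    have hne : p ≠ q := fun h => (not_grp hp hq hpq).2.2 (h ▸ rfl)
    obtain ⟨s, ⟨hs, hps, hqs, hc⟩, hu⟩ := hG.res p hp q hq hne M (by omega)
    refine ⟨s, ⟨(hF s).2 ⟨hs, ?_⟩, hps, hqs, hc⟩, ?_⟩
    · rintro a rfl
      exact hpq a ⟨hps, hqs⟩
    · rintro s' ⟨hs', h'⟩
      exact hu s' ⟨((hF s').1 hs').1, h'⟩
  · intro _ s hs p hp q hq hqp a hpa hqa hM
    obtain ⟨hs, hsg⟩ := (hF s).1 hs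
    have hp' := hG.sub s hs hp
    have hq' := hG.sub s hs hq
    obtain ⟨h1, h2⟩ := mem_grp_pts hp' hq' hqp hpa hqa
    exact hsg a ((hG.res p hp' q hq' hqp.symm M (by omega)).unique ⟨hs, hp, hq, hM⟩
      ⟨hgD a h1 h2, hpa, hqa, hgM p hp' a h1 h2 hpa⟩)
  all_goals exact fun h => absurd ho h

theorem loc_gdd {o M : ℕ} {b : Finset ℕ} {D : Finset (Finset Pt)} {d : Pt → Finset Pt → ℕ} (ho : o ∉ b)
    (hG : Good (pts o b) (fun x y => pr o x = pr o y) D M d) : Loc o M b D d := by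
  refine ⟨hG.sub, hG.crd, ?_, ?_, ?_, ?_, ?_, ?_, ?_, ?_, ?_, ?_⟩
  · intro s hs T hTs hT a hTa
    obtain ⟨u, hu, v, hv, huv⟩ := two_of_three hT
    have h1 := hG.sub s hs (hTs hu)
    have h2 := hG.sub s hs (hTs hv)
    apply huv
    apply hG.trv s hs v (hTs hv) u (hTs hu)
    have h3 := hTa hu
    have h4 := hTa hv
    rcases u with _ | ⟨x, i⟩
    · exact absurd ((none_mem_pts _ _).1 h1) ho
    · rcases v with _ | ⟨y, j⟩
      · exact absurd ((none_mem_pts _ _).1 h2) ho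
      · rw [some_mem_grp] at h3 h4
        show y = x
        rw [h3, h4]
  · intro p hp s hs hps; exact (hG.clt p hp s hs hps).le
  · exact fun h => absurd h ho
  · exact fun h => absurd h ho
  · exact fun h => absurd h ho
  · exact fun h => absurd h ho
  · exact fun _ => hG.trv
  · exact fun _ => hG.cov
  · exact fun _ => hG.res
  · exact fun _ => hG.clt

section main
variable {o M : ℕ} {X : Finset ℕ} {B : Finset (Finset ℕ)} {F : Finset ℕ → Finset (Finset Pt)}
  {C : Finset ℕ → Pt → Finset Pt → ℕ}

theorem trip_lemma (ho : o ∈ X) (hF : ∀ b ∈ B, Loc o M b (F b) (C b))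
    (T : Finset Pt) (hT : T ⊆ pts o X) (hTc : T.card = 3) (hTg : ∀ a, ¬ T ⊆ grp a) :
    ∃ R ⊆ X, R.card = 3 ∧ ∀ b ∈ B, (R ⊆ b → ∃! s, s ∈ F b ∧ T ⊆ s) ∧
      ∀ s ∈ F b, T ⊆ s → R ⊆ b := by
  classical
  by_cases hinj : ∀ u ∈ T, ∀ v ∈ T, pr o u = pr o v → u = v
  · refine ⟨T.image (pr o), ?_, ?_, ?_⟩
    · intro x hx
      obtain ⟨p, hp, rfl⟩ := mem_image.1 hx
      exact pr_mem (hT hp)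
    · rw [card_image_of_injOn (fun u hu v hv h => hinj u hu v hv h), hTc]
    · intro b hb
      constructor
      · intro hR
        have hTb : T ⊆ pts o b := fun p hp => mem_pts_of_pr (hT hp) (hR (mem_image_of_mem _ hp))
        by_cases hob : o ∈ b
        · exact (hF b hb).covA hob T hTb hTc hTg
        · exact (hF b hb).covB hob T hTb hTc hinj
      · intro s hs hTs x hx
        obtain ⟨p, hp, rfl⟩ := mem_image.1 hx
        exact pr_mem ((hF b hb).sub s hs (hTs hp))
  · push Not at hinj
    obtain ⟨u, hu, v, hv, huv, hne⟩ := hinj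
    obtain ⟨w, hw⟩ : ∃ w, (T.erase u).erase v = {w} := by
      rw [← card_eq_one, card_erase_of_mem (mem_erase.2 ⟨hne.symm, hv⟩), card_erase_of_mem hu, hTc]
    have hTe : ∀ z ∈ T, z = u ∨ z = v ∨ z = w := by
      intro z hz
      by_contra hcon
      push Not at hcon
      have : z ∈ (T.erase u).erase v := by simp [hcon.1, hcon.2.1, hz]
      rw [hw, mem_singleton] at this
      exact hcon.2.2 this
    have hwT : w ∈ T := by
      have : w ∈ (T.erase u).erase v := by rw [hw]; simp
      simp only [mem_erase] at this
      exact this.2.2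
    obtain ⟨h1, h2, h3⟩ := same_pr (hT hu) (hT hv) hne.symm huv
    have hwg : w ∉ grp (pr o u) := by
      intro h
      apply hTg (pr o u)
      intro z hz
      rcases hTe z hz with rfl | rfl | rfl <;> assumption
    have hwo : pr o w ≠ o ∧ pr o w ≠ pr o u := by
      have hwX := hT hwT
      rcases w with _ | ⟨y, j⟩
      · exact absurd (none_mem_grp _) hwg
      · rw [some_mem_grp] at hwg
        rw [some_mem_pts] at hwX
        exact ⟨hwX.1, hwg⟩
    refine ⟨{o, pr o u, pr o w}, ?_, card_three_subset h1.symm hwo.1.symm hwo.2.symm, ?_⟩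
    · simp only [insert_subset_iff, singleton_subset_iff]
      exact ⟨ho, pr_mem (hT hu), pr_mem (hT hwT)⟩
    · intro b hb
      simp only [insert_subset_iff, singleton_subset_iff]
      constructor
      · rintro ⟨r1, r2, r3⟩
        refine (hF b hb).covA r1 T ?_ hTc hTg
        intro z hz
        apply mem_pts_of_pr (hT hz)
        rcases hTe z hz with rfl | rfl | rfl
        · exact r2
        · rw [← huv]; exact r2
        · exact r3
      · intro s hs hTs
        refine ⟨?_, pr_mem ((hF b hb).sub s hs (hTs hu)), pr_mem ((hF b hb).sub s hs (hTs hwT))⟩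
        by_contra hob
        exact hne ((hF b hb).trv hob s hs u (hTs hu) v (hTs hv) huv)

theorem pair_lemma (ho : o ∈ X) (hF : ∀ b ∈ B, Loc o M b (F b) (C b))
    (p q : Pt) (hp : p ∈ pts o X) (hq : q ∈ pts o X) (hqp : q ≠ p) :
    ∃ z ∈ X, z ≠ pr o p ∧ ∀ b ∈ B, pr o p ∈ b →
      (z ∈ b → ∀ m < M, ∃! s, s ∈ F b ∧ p ∈ s ∧ q ∈ s ∧ C b p s = m) ∧
      ∀ s ∈ F b, p ∈ s → q ∈ s → z ∈ b := by
  by_cases h : pr o p = pr o q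
  · obtain ⟨h1, -, -⟩ := same_pr hp hq hqp h
    refine ⟨o, ho, h1.symm, ?_⟩
    intro b hb hpb
    constructor
    · intro hob m hm
      exact (hF b hb).resA hob p (mem_pts_of_pr hp hpb) q (mem_pts_of_pr hq (h ▸ hpb)) hqp m hm
    · intro s hs hps hqs
      by_contra hob
      exact hqp ((hF b hb).trv hob s hs p hps q hqs h).symm
  · refine ⟨pr o q, pr_mem hq, Ne.symm h, ?_⟩
    intro b hb hpb
    constructor
    · intro hqb m hm
      have hp' := mem_pts_of_pr hp hpb
      have hq' := mem_pts_of_pr hq hqb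
      by_cases hob : o ∈ b
      · exact (hF b hb).resA hob p hp' q hq' hqp m hm
      · exact (hF b hb).resB hob p hp' q hq' h m hm
    · intro s hs hps hqs
      exact pr_mem ((hF b hb).sub s hs hqs)

theorem main_thm (n : ℕ) (ho : o ∈ X) (hX : X.card = n + 1) (hBX : ∀ b ∈ B, b ⊆ X)
    (hcov : ∀ R ⊆ X, R.card = 3 → ∃! b, b ∈ B ∧ R ⊆ b)
    (hres : ∀ x ∈ X, ∃ (r : ℕ) (c : Finset ℕ → ℕ), (∀ b ∈ B, x ∈ b → c b < r) ∧
      ∀ y ∈ X, y ≠ x → ∀ i < r, ∃! b, b ∈ B ∧ x ∈ b ∧ y ∈ b ∧ c b = i)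
    (hF : ∀ b ∈ B, Loc o M b (F b) (C b)) : ExistsRDSQS (3 * n + 1) := by
  classical
  have hE : ∀ s, s ∈ (X.erase o).image grp ∪ B.biUnion F ↔
      (∃ a ∈ X, a ≠ o ∧ s = grp a) ∨ ∃ b ∈ B, s ∈ F b := by
    intro s
    simp only [mem_union, mem_image, mem_erase, mem_biUnion]
    constructor
    · rintro (⟨a, ⟨h1, h2⟩, rfl⟩ | h)
      · exact Or.inl ⟨a, h2, h1, rfl⟩
      · exact Or.inr h
    · rintro (⟨a, h1, h2, rfl⟩ | h)
      · exact Or.inl ⟨a, ⟨h2, h1⟩, rfl⟩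
      · exact Or.inr h
  set E := (X.erase o).image grp ∪ B.biUnion F with hEdef
  have hFV : ∀ b ∈ B, ∀ s ∈ F b, s ⊆ pts o X := by
    intro b hb s hs p hp
    have := (hF b hb).sub s hs hp
    rcases p with _ | ⟨x, i⟩
    · rw [none_mem_pts]; exact ho
    · rw [some_mem_pts] at this ⊢; exact ⟨this.1, hBX b hb this.2⟩
  have htrip : ∀ s : Finset Pt, s.card = 4 → ∃ T ⊆ s, T.card = 3 := fun s hs =>
    exists_subset_card_eq (by omega)
  have hFng : ∀ b ∈ B, ∀ s ∈ F b, ∀ a, s ≠ grp a := by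
    rintro b hb s hs a rfl
    obtain ⟨T, hT, hTc⟩ := htrip _ (card_grp a)
    exact (hF b hb).ng _ hs T hT hTc a hT
  have hFu : ∀ b ∈ B, ∀ b' ∈ B, ∀ s, s ∈ F b → s ∈ F b' → b = b' := by
    intro b hb b' hb' s hs hs'
    obtain ⟨T, hT, hTc⟩ := htrip _ ((hF b hb).crd s hs)
    obtain ⟨R, hR, hRc, h⟩ := trip_lemma ho hF T (hT.trans (hFV b hb s hs)) hTc
      ((hF b hb).ng s hs T hT hTc)
    exact (hcov R hR hRc).unique ⟨hb, (h b hb).2 s hs hT⟩ ⟨hb', (h b' hb').2 s hs' hT⟩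
  have hblk : ∀ s, ∃ b, ∀ b' ∈ B, s ∈ F b' → b = b' := by
    intro s
    by_cases h : ∃ b ∈ B, s ∈ F b
    · obtain ⟨b, hb, hs⟩ := h
      exact ⟨b, fun b' hb' hs' => hFu b hb b' hb' s hs hs'⟩
    · exact ⟨∅, fun b' hb' hs' => absurd ⟨b', hb', hs'⟩ h⟩
  choose blk hblk using hblk
  refine final_transfer (κ := Option (ℕ × ℕ)) _ (pts o X) E (by rw [card_pts o X ho, hX]; rfl) ?_ ?_ ?_
  · intro s hs
    rcases (hE s).1 hs with ⟨a, ha, hao, rfl⟩ | ⟨b, hb, hsb⟩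
    · refine ⟨?_, card_grp a⟩
      rintro (_ | ⟨x, i⟩) hp
      · rw [none_mem_pts]; exact ho
      · rw [some_mem_grp] at hp; subst hp
        rw [some_mem_pts]; exact ⟨hao, ha⟩
    · exact ⟨hFV b hb s hsb, (hF b hb).crd s hsb⟩
  · intro T hT hTc
    by_cases hTg : ∃ a, T ⊆ grp a
    · obtain ⟨a, hTa⟩ := hTg
      obtain ⟨u, hu, v, hv, huv⟩ := two_of_three hTc
      obtain ⟨h1, h2⟩ := mem_grp_pts (hT hu) (hT hv) huv (hTa hu) (hTa hv)
      refine ⟨grp a, ⟨(hE _).2 (Or.inl ⟨a, h1, h2, rfl⟩), hTa⟩, ?_⟩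
      rintro s ⟨hs, hTs⟩
      rcases (hE s).1 hs with ⟨a', ha, hao, rfl⟩ | ⟨b, hb, hsb⟩
      · rw [grp_unique huv (hTa hu) (hTa hv) (hTs hu) (hTs hv)]
      · exact absurd hTa ((hF b hb).ng s hsb T hTs hTc a)
    · push Not at hTg
      obtain ⟨R, hR, hRc, h⟩ := trip_lemma ho hF T hT hTc hTg
      obtain ⟨b, ⟨hb, hRb⟩, hbu⟩ := hcov R hR hRc
      obtain ⟨s, ⟨hs, hTs⟩, hsu⟩ := (h b hb).1 hRb
      refine ⟨s, ⟨(hE _).2 (Or.inr ⟨b, hb, hs⟩), hTs⟩, ?_⟩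
      rintro s' ⟨hs', hTs'⟩
      rcases (hE s').1 hs' with ⟨a', ha, hao, rfl⟩ | ⟨b', hb', hsb'⟩
      · exact absurd hTs' (hTg a')
      · have := hbu b' ⟨hb', (h b' hb').2 s' hsb' hTs'⟩
        subst this
        exact hsu s' ⟨hsb', hTs'⟩
  · intro p hp
    obtain ⟨r, c, hc1, hc2⟩ := hres (pr o p) (pr_mem hp)
    obtain ⟨col, hcol⟩ : ∃ col : Finset Pt → Option (ℕ × ℕ), ∀ s, col s =
      if ∃ a, s = grp a then none else
        if C (blk s) p s = M then none else some (c (blk s), C (blk s) p s) := ⟨_, fun _ => rfl⟩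
    have hcolg : ∀ a, col (grp a) = none := by
      intro a; rw [hcol, if_pos ⟨a, rfl⟩]
    have hcolF : ∀ b ∈ B, ∀ s ∈ F b, col s = if C b p s = M then none else some (c b, C b p s) := by
      intro b hb s hs
      rw [hcol, if_neg (by rintro ⟨a, ha⟩; exact hFng b hb s hs a ha), hblk s b hb hs]
    have hpb : ∀ b ∈ B, ∀ s ∈ F b, ∀ q ∈ s, pr o q ∈ b := fun b hb s hs q hq =>
      pr_mem ((hF b hb).sub s hs hq)
    refine ⟨insert none ((range r ×ˢ range M).image some), col, ?_, ?_⟩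
    · intro s hs hps
      rcases (hE s).1 hs with ⟨a', ha, hao, rfl⟩ | ⟨b, hb, hsb⟩
      · rw [hcolg]; exact mem_insert_self _ _
      · rw [hcolF b hb s hsb]
        split_ifs with hM
        · exact mem_insert_self _ _
        · apply mem_insert_of_mem
          apply mem_image_of_mem
          have h1 := (hF b hb).cle p ((hF b hb).sub s hsb hps) s hsb hps
          have h2 := hc1 b hb (hpb b hb s hsb p hps)
          simp only [mem_product, mem_range]
          exact ⟨h2, by omega⟩
    · intro q hq hqp i hi
      rcases i with _ | ⟨j, m⟩
      · by_cases hg : ∃ a, p ∈ grp a ∧ q ∈ grp a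
        · obtain ⟨a, hpa, hqa⟩ := hg
          obtain ⟨h1, h2⟩ := mem_grp_pts hp hq hqp hpa hqa
          refine ⟨grp a, ⟨(hE _).2 (Or.inl ⟨a, h1, h2, rfl⟩), hpa, hqa, hcolg a⟩, ?_⟩
          rintro s ⟨hs, hps, hqs, hcs⟩
          rcases (hE s).1 hs with ⟨a', ha, hao, rfl⟩ | ⟨b, hb, hsb⟩
          · rw [grp_unique hqp hpa hqa hps hqs]
          · exfalso
            rw [hcolF b hb s hsb] at hcs
            have hM : C b p s = M := by
              by_contra hM
              rw [if_neg hM] at hcs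
              cases hcs
            by_cases hob : o ∈ b
            · exact (hF b hb).resM' hob s hsb p hps q hqs hqp a hpa hqa hM
            · have := (hF b hb).cltB hob p ((hF b hb).sub s hsb hps) s hsb hps
              omega
        · push Not at hg
          have hg' : ∀ a, ¬ (p ∈ grp a ∧ q ∈ grp a) := fun a h => hg a h.1 h.2
          obtain ⟨h1, h2, h3⟩ := not_grp hp hq hg'
          have hR := hcov {o, pr o p, pr o q} (by
            simp only [insert_subset_iff, singleton_subset_iff]
            exact ⟨ho, pr_mem hp, pr_mem hq⟩) (card_three_subset h1.symm h2.symm h3)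
          simp only [insert_subset_iff, singleton_subset_iff] at hR
          obtain ⟨b, ⟨hb, hob, hpb', hqb'⟩, hbu⟩ := hR
          obtain ⟨s, ⟨hs, hps, hqs, hM⟩, hsu⟩ := (hF b hb).resM hob p (mem_pts_of_pr hp hpb')
            q (mem_pts_of_pr hq hqb') hg'
          refine ⟨s, ⟨(hE _).2 (Or.inr ⟨b, hb, hs⟩), hps, hqs, ?_⟩, ?_⟩
          · rw [hcolF b hb s hs, if_pos hM]
          · rintro s' ⟨hs', hps', hqs', hcs'⟩
            rcases (hE s').1 hs' with ⟨a', ha, hao, rfl⟩ | ⟨b', hb', hsb'⟩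
            · exact absurd hqs' (hg a' hps')
            · rw [hcolF b' hb' s' hsb'] at hcs'
              have hM' : C b' p s' = M := by
                by_contra hM
                rw [if_neg hM] at hcs'
                cases hcs'
              have hob' : o ∈ b' := by
                by_contra hob
                have := (hF b' hb').cltB hob p ((hF b' hb').sub s' hsb' hps') s' hsb' hps'
                omega
              have := hbu b' ⟨hb', hob', hpb b' hb' s' hsb' p hps', hpb b' hb' s' hsb' q hqs'⟩
              subst this
              exact hsu s' ⟨hsb', hps', hqs', hM'⟩
      · have hjm : j < r ∧ m < M := by simpa using hi
        obtain ⟨z, hz, hzp, h⟩ := pair_lemma ho hF p q hp hq hqp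
        obtain ⟨b, ⟨hb, hpb', hzb, hcb⟩, hbu⟩ := hc2 z hz hzp j hjm.1
        obtain ⟨s, ⟨hs, hps, hqs, hm⟩, hsu⟩ := (h b hb hpb').1 hzb m hjm.2
        refine ⟨s, ⟨(hE _).2 (Or.inr ⟨b, hb, hs⟩), hps, hqs, ?_⟩, ?_⟩
        · rw [hcolF b hb s hs, if_neg (by omega), hcb, hm]
        · rintro s' ⟨hs', hps', hqs', hcs'⟩
          rcases (hE s').1 hs' with ⟨a', ha, hao, rfl⟩ | ⟨b', hb', hsb'⟩
          · rw [hcolg] at hcs'; cases hcs'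
          · rw [hcolF b' hb' s' hsb'] at hcs'
            split_ifs at hcs' with hM
            simp only [Option.some.injEq, Prod.mk.injEq] at hcs'
            have hpb'' := hpb b' hb' s' hsb' p hps'
            have := hbu b' ⟨hb', hpb'', (h b' hb' hpb'').2 s' hsb' hps' hqs', hcs'.1⟩
            subst this
            exact hsu s' ⟨hsb', hps', hqs', hcs'.2⟩

end main

end helpers

/-- If there exist an RDS(3, k+1, n+1), an RDSQS(3k+1) and an
RDGDD(3, 4, 3(k+1)) of type 3^(k+1), then there exists an RDSQS(3n+1). -/
theorem stmt_4 (k n : ℕ) (hk : 0 < k) (hn : 0 < n)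
    (h1 : ExistsRDS 3 (k + 1) (n + 1))
    (h2 : ExistsRDSQS (3 * k + 1))
    (h3 : ∃ X Gs Bs, IsRDGDD 3 {4} 3 (k + 1) X Gs Bs) :
    ExistsRDSQS (3 * n + 1) := by
  classical
  obtain ⟨X, B, ⟨hX, hB, hcov⟩, hres⟩ := h1
  obtain ⟨r2, X2, B2, c2, hr2, hX2, hG2⟩ := sqs_good k hk h2
  obtain ⟨M, X3, g3, B3, c3, hM, hX3, s1, s2, s3, s4, hG3⟩ := gdd_good k hk h3
  have hrM : r2 = M + 1 := by omega
  subst hrM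
  obtain ⟨o, ho⟩ : X.Nonempty := by rw [← card_pos]; omega
  have hloc : ∀ b, ∃ F c, b ∈ B → Loc o M b F c := by
    intro b
    by_cases hb : b ∈ B
    · by_cases hob : o ∈ b
      · obtain ⟨D, d, e1, e2, e3⟩ := sqs_local k M X2 B2 c2 hX2 hG2 o b hob (hB b hb).2
        obtain ⟨F, c, h⟩ := loc_sqs hob e1 e2 e3
        exact ⟨F, c, fun _ => h⟩
      · obtain ⟨D, d, e1⟩ := gdd_local k M X3 g3 B3 c3 hX3 s1 s2 s3 s4 hG3 o b hob (hB b hb).2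
        exact ⟨D, d, fun _ => loc_gdd hob e1⟩
    · exact ⟨∅, fun _ _ => 0, fun h => absurd h hb⟩
  choose F C hF using hloc
  refine main_thm (M := M) n ho hX (fun b hb => (hB b hb).1) hcov ?_ hF
  intro x hx
  obtain ⟨r, c, h1, h2⟩ := res_fwd _ _ _ (notMem_erase x X) (hres x hx)
  exact ⟨r, c, h1, fun y hy hyx => h2 y (mem_erase.2 ⟨hyx, hy⟩)⟩
end

section
/- There exists an RDSQS(22), i.e., a Steiner quadruple system SQS(22) whose derived design at every point is a KTS(21). -/
open Finset

def qRot (m x : ℕ) : ℕ :=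
  ((((m % 2097152) <<< x) ||| ((m % 2097152) >>> (21 - x))) % 2097152) + (m / 2097152) * 2097152

def qL : List ℕ :=
  [57, 114, 228, 456, 912, 1824, 3648, 7296, 14592, 29184, 58368,
   116736, 233472, 466944, 933888, 1867776, 1638401, 1179651, 262151, 524302, 1048604, 75,
   150, 300, 600, 1200, 2400, 4800, 9600, 19200, 38400, 76800, 153600,
   307200, 614400, 1228800, 360449, 720898, 1441796, 786441, 1572882, 1048613, 209, 418,
   836, 1672, 3344, 6688, 13376, 26752, 53504, 107008, 214016, 428032, 856064,
   1712128, 1327105, 557059, 1114118, 131085, 262170, 524340, 1048680, 531, 1062, 2124,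
   4248, 8496, 16992, 33984, 67968, 135936, 271872, 543744, 1087488, 77825, 155650,
   311300, 622600, 1245200, 393249, 786498, 1572996, 1048841, 645, 1290, 2580, 5160,
   10320, 20640, 41280, 82560, 165120, 330240, 660480, 1320960, 544769, 1089538, 81925,
   163850, 327700, 655400, 1310800, 524449, 1048898, 1345, 2690, 5380, 10760, 21520,
   43040, 86080, 172160, 344320, 688640, 1377280, 657409, 1314818, 532485, 1064970, 32789,
   65578, 131156, 262312, 524624, 1049248, 2309, 4618, 9236, 18472, 36944, 73888,
   147776, 295552, 591104, 1182208, 267265, 534530, 1069060, 40969, 81938, 163876, 327752,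
   655504, 1311008, 524865, 1049730, 3105, 6210, 12420, 24840, 49680, 99360, 198720,
   397440, 794880, 1589760, 1082369, 67587, 135174, 270348, 540696, 1081392, 65633, 131266,
   262532, 525064, 1050128, 4165, 8330, 16660, 33320, 66640, 133280, 266560, 533120,
   1066240, 35329, 70658, 141316, 282632, 565264, 1130528, 163905, 327810, 655620, 1311240,
   525329, 1050658, 4227, 8454, 16908, 33816, 67632, 135264, 270528, 541056, 1082112,
   67073, 134146, 268292, 536584, 1073168, 49185, 98370, 196740, 393480, 786960, 1573920,
   1050689, 4385, 8770, 17540, 35080, 70160, 140320, 280640, 561280, 1122560, 147969,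
   295938, 591876, 1183752, 270353, 540706, 1081412, 65673, 131346, 262692, 525384, 1050768,
   6153, 12306, 24612, 49224, 98448, 196896, 393792, 787584, 1575168, 1053185, 9219,
   18438, 36876, 73752, 147504, 295008, 590016, 1180032, 262913, 525826, 1051652, 8737,
   17474, 34948, 69896, 139792, 279584, 559168, 1118336, 139521, 279042, 558084, 1116168,
   135185, 270370, 540740, 1081480, 65809, 131618, 263236, 526472, 1052944, 16643, 33286,
   66572, 133144, 266288, 532576, 1065152, 33153, 66306, 132612, 265224, 530448, 1060896,
   24641, 49282, 98564, 197128, 394256, 788512, 1577024, 1056897, 17417, 34834, 69668,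
   139336, 278672, 557344, 1114688, 132225, 264450, 528900, 1057800, 18449, 36898, 73796,
   147592, 295184, 590368, 1180736, 264321, 528642, 1057284, 2097187, 2097222, 2097292, 2097432,
   2097712, 2098272, 2099392, 2101632, 2106112, 2115072, 2132992, 2168832, 2240512, 2383872, 2670592,
   3244032, 2293761, 2490370, 2883588, 3670024, 3145745, 2097673, 2098194, 2099236, 2101320, 2105488,
   2113824, 2130496, 2163840, 2230528, 2363904, 2630656, 3164160, 2134017, 2170882, 2244612, 2392072,
   2686992, 3276832, 2359361, 2621570, 3145988, 2098181, 2099210, 2101268, 2105384, 2113616, 2130080,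
   2163008, 2228864, 2360576, 2624000, 3150848, 2107393, 2117634, 2138116, 2179080, 2261008, 2424864,
   2752576, 3408000, 2621697, 3146242, 2113665, 2130178, 2163204, 2229256, 2361360, 2625568, 3153984]

def qRes0 : Fin 10 → List ℕ :=
  ![[4384, 67072, 131084, 270352, 557058, 1050688, 2113664],
    [644, 24640, 67586, 393248, 525328, 1048840, 2134016],
    [74, 18448, 139520, 360448, 524448, 1053184, 2098180],
    [4164, 9218, 49184, 65672, 262912, 657408, 3145744],
    [6152, 8736, 16642, 32788, 132224, 1638400, 2359360],
    [208, 2308, 77824, 147968, 786440, 1082368, 2097186],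
    [17416, 35328, 65632, 135184, 262150, 1056896, 2621696],
    [3104, 4226, 65808, 163904, 532484, 1327104, 2097672],
    [530, 1344, 40968, 264320, 544768, 1048612, 2293760],
    [56, 33152, 81924, 267264, 524864, 1179650, 2107392]]

def qResInf : Fin 10 → List ℕ :=
  ![[16513, 33026, 66052, 132104, 264208, 528416, 1056832],
    [35, 8336, 33344, 71680, 147460, 263424, 1572872],
    [280, 1120, 20482, 40964, 196609, 526848, 1310848],
    [70, 8232, 66688, 133376, 266752, 573440, 1048593],
    [4168, 10241, 17920, 32928, 393218, 589840, 1048836],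
    [140, 16464, 35840, 143360, 327712, 524545, 1049090],
    [2058, 4116, 16672, 131712, 262209, 533504, 1146880],
    [521, 2084, 65856, 163856, 286720, 524418, 1053696],
    [1042, 2240, 8960, 36865, 81928, 786436, 1179680],
    [560, 1029, 4480, 73730, 294920, 655424, 1067008]]

def qR (x : ℕ) (i : Fin 10) : List ℕ :=
  if x = 21 then qResInf i else (qRes0 i).map fun m => qRot m x

def qSet (m : ℕ) : Finset ℕ := (Finset.range 22).filter fun i => m.testBit i = true

def qB : Finset (Finset ℕ) := (qL.map qSet).toFinset

def qT (m a : ℕ) : Bool := Nat.beq (Nat.land (Nat.shiftRight m a) 1) 1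

theorem qT_eq (m a : ℕ) : qT m a = m.testBit a := by
  have h : Nat.land (Nat.shiftRight m a) 1 = (m >>> a) % 2 := Nat.and_one_is_mod _
  rw [qT, h, Nat.testBit_eq_decide_div_mod_eq, Nat.shiftRight_eq_div_pow, Bool.eq_iff_iff]
  simp

def qCheck1 : Bool :=
  qL.all fun m => Nat.ble m 4194303 && (((List.range 22).filter fun i => qT m i).length.beq 4)

def qCheck2 : Bool :=
  (List.range 22).all fun a =>
    (fun La : List ℕ => (List.range 22).all fun b => Nat.beq a b ||
      (fun Lb : List ℕ => (List.range 22).all fun c => Nat.beq a c || Nat.beq b c ||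
        ((Lb.filter fun m => qT m c).length.beq 1)) (La.filter fun m => qT m b))
      (qL.filter fun m => qT m a)

def qCheck3 : Bool :=
  (List.range 22).all fun x => (List.finRange 10).all fun i =>
    (fun C : List ℕ =>
      (C.all fun m => Nat.ble m 4194303 && !(qT m x)) &&
      (List.range 22).all fun y => Nat.beq y x || ((C.filter fun m => qT m y).length.beq 1)) (qR x i)

def qCheck4 : Bool :=
  (List.range 22).all fun x =>
    (fun Lx : List ℕ => (List.finRange 10).all fun i =>
      (qR x i).all fun m => Lx.any fun n => Nat.beq n (m ||| 2 ^ x))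
      (qL.filter fun m => qT m x)

def qCheck5 : Bool :=
  (List.range 22).all fun x =>
    (qL.filter fun m => qT m x).all fun n =>
      ((List.finRange 10).filter fun i => (qR x i).any fun m => Nat.beq n (m ||| 2 ^ x)).length.beq 1

set_option maxRecDepth 100000 in
theorem qc1 : qCheck1 = true := by decide +kernel
set_option maxRecDepth 100000 in
theorem qc2 : qCheck2 = true := by decide +kernel
set_option maxRecDepth 100000 in
theorem qc3 : qCheck3 = true := by decide +kernel
set_option maxRecDepth 100000 in
theorem qc4 : qCheck4 = true := by decide +kernel
set_option maxRecDepth 100000 in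
theorem qc5 : qCheck5 = true := by decide +kernel

theorem qFilterOne {α : Type*} (l : List α) (p : α → Bool) (h : (l.filter p).length = 1) :
    ∃ m, (m ∈ l ∧ p m = true) ∧ ∀ m', m' ∈ l → p m' = true → m' = m := by
  obtain ⟨m, hm⟩ := List.length_eq_one_iff.mp h
  have key : ∀ m', (m' ∈ l ∧ p m' = true) ↔ m' = m := by
    intro m'
    rw [← List.mem_filter, hm, List.mem_singleton]
  exact ⟨m, (key m).2 rfl, fun m' h1 h2 => (key m').1 ⟨h1, h2⟩⟩

theorem mem_qSet (m i : ℕ) : i ∈ qSet m ↔ i < 22 ∧ m.testBit i = true := by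
  simp [qSet]

theorem mem_qB (b : Finset ℕ) : b ∈ qB ↔ ∃ m ∈ qL, qSet m = b := by
  simp [qB]

theorem qSet_card (m : ℕ) : (qSet m).card = ((List.range 22).filter fun i => m.testBit i).length := by
  have : qSet m = ((List.range 22).filter fun i => m.testBit i).toFinset := by
    ext i; simp [mem_qSet]
  rw [this, List.toFinset_card_of_nodup (List.Nodup.filter _ List.nodup_range)]

theorem qSet_inj {m n : ℕ} (hm : m < 4194304) (hn : n < 4194304) (h : qSet m = qSet n) : m = n := by
  apply Nat.eq_of_testBit_eq
  intro i
  by_cases hi : i < 22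
  · have := congrArg (fun s => i ∈ s) h
    simp only [mem_qSet, hi, true_and, eq_iff_iff] at this
    exact Bool.eq_iff_iff.mpr this
  · have h2 : (4194304 : ℕ) ≤ 2 ^ i := by
      calc (4194304 : ℕ) = 2 ^ 22 := by norm_num
        _ ≤ 2 ^ i := Nat.pow_le_pow_right (by norm_num) (by omega)
    rw [Nat.testBit_lt_two_pow (by omega), Nat.testBit_lt_two_pow (by omega)]

theorem q1 {m : ℕ} (hm : m ∈ qL) : m < 4194304 ∧ (qSet m).card = 4 := by
  have h := qc1
  simp only [qCheck1, qT_eq, Nat.beq_eq, Nat.ble_eq, List.all_eq_true, Bool.and_eq_true, decide_eq_true_eq, beq_iff_eq] at h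
  rw [qSet_card]
  exact ⟨Nat.lt_succ_of_le (h m hm).1, (h m hm).2⟩

theorem q2 {a b c : ℕ} (ha : a < 22) (hb : b < 22) (hc : c < 22) (hab : a ≠ b) (hac : a ≠ c)
    (hbc : b ≠ c) : ∃ m, (m ∈ qL ∧ m.testBit a = true ∧ m.testBit b = true ∧ m.testBit c = true) ∧
      ∀ m', m' ∈ qL → m'.testBit a = true → m'.testBit b = true → m'.testBit c = true → m' = m := by
  have h := qc2
  simp only [qCheck2, qT_eq, Nat.beq_eq, Nat.ble_eq, List.all_eq_true, Bool.or_eq_true, beq_iff_eq, List.mem_range] at h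
  have h1 := (h a ha b hb).resolve_left hab c hc
  obtain ⟨m, ⟨h2, h3⟩, h4⟩ := qFilterOne _ _ (h1.resolve_left (by simp [hac, hbc]))
  simp only [List.mem_filter] at h2 h4
  exact ⟨m, ⟨h2.1.1, h2.1.2, h2.2, h3⟩, fun m' g1 g2 g3 g4 => h4 m' ⟨⟨g1, g2⟩, g3⟩ g4⟩

theorem q3 {x : ℕ} (hx : x < 22) (i : Fin 10) :
    (∀ m ∈ qR x i, m < 4194304 ∧ m.testBit x = false) ∧
    ∀ y < 22, y ≠ x → ∃ m, (m ∈ qR x i ∧ m.testBit y = true) ∧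
      ∀ m', m' ∈ qR x i → m'.testBit y = true → m' = m := by
  have h := qc3
  simp only [qCheck3, qT_eq, Nat.beq_eq, Nat.ble_eq, List.all_eq_true, Bool.or_eq_true, beq_iff_eq, List.mem_range,
    Bool.and_eq_true, decide_eq_true_eq, Bool.not_eq_true'] at h
  have h1 := h x hx i (List.mem_finRange i)
  exact ⟨fun m hm => ⟨Nat.lt_succ_of_le (h1.1 m hm).1, (h1.1 m hm).2⟩, fun y hy hxy => qFilterOne _ _ ((h1.2 y hy).resolve_left hxy)⟩

theorem qErase {x m : ℕ} (hx : x < 22) (h : m.testBit x = false) :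
    (qSet (m ||| 2 ^ x)).erase x = qSet m := by
  ext j
  rw [Finset.mem_erase, mem_qSet, mem_qSet, Nat.testBit_or, Nat.testBit_two_pow]
  by_cases hj : j = x
  · subst hj; simp [h]
  · simp [hj, Ne.symm hj]

theorem q4 {x : ℕ} (hx : x < 22) (i : Fin 10) {m : ℕ} (hm : m ∈ qR x i) :
    m ||| 2 ^ x ∈ qL ∧ (m ||| 2 ^ x).testBit x = true := by
  have h := qc4
  simp only [qCheck4, qT_eq, Nat.beq_eq, Nat.ble_eq, List.all_eq_true, List.any_eq_true, beq_iff_eq, List.mem_range,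
    List.mem_filter] at h
  obtain ⟨n, hn, rfl⟩ := h x hx i (List.mem_finRange i) m hm
  exact hn

theorem q5 {x n : ℕ} (hx : x < 22) (hn : n ∈ qL) (hnx : n.testBit x = true) :
    ∃ i : Fin 10, (∃ m ∈ qR x i, n = m ||| 2 ^ x) ∧
      ∀ j : Fin 10, (∃ m ∈ qR x j, n = m ||| 2 ^ x) → j = i := by
  have h := qc5
  simp only [qCheck5, qT_eq, Nat.beq_eq, Nat.ble_eq, List.all_eq_true, beq_iff_eq, List.mem_range, List.mem_filter] at h
  obtain ⟨i, hi, hu⟩ := qFilterOne _ _ (h x hx n ⟨hn, hnx⟩)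
  simp only [Nat.beq_eq, List.any_eq_true, beq_iff_eq, List.mem_finRange, true_and, forall_const] at hi hu
  exact ⟨i, hi, hu⟩

/-- There exists an RDSQS(22). -/
theorem stmt_5 : ExistsRDSQS 22 := by
  refine ⟨Finset.range 22, qB, ⟨by simp, ?_, ?_⟩, ?_⟩
  · intro b hb
    obtain ⟨m, hm, rfl⟩ := (mem_qB b).1 hb
    exact ⟨Finset.filter_subset _ _, (q1 hm).2⟩
  · intro T hT hc
    obtain ⟨a, b, c, hab, hac, hbc, rfl⟩ := Finset.card_eq_three.1 hc
    have ha : a < 22 := by simpa using hT (by simp : a ∈ ({a, b, c} : Finset ℕ))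
    have hb : b < 22 := by simpa using hT (by simp : b ∈ ({a, b, c} : Finset ℕ))
    have hc : c < 22 := by simpa using hT (by simp : c ∈ ({a, b, c} : Finset ℕ))
    obtain ⟨m, ⟨h1, h2, h3, h4⟩, hu⟩ := q2 ha hb hc hab hac hbc
    refine ⟨qSet m, ⟨(mem_qB _).2 ⟨m, h1, rfl⟩, ?_⟩, ?_⟩
    · simp [Finset.insert_subset_iff, mem_qSet, *]
    · rintro s ⟨hs, hsub⟩
      obtain ⟨n, hn, rfl⟩ := (mem_qB s).1 hs
      simp only [Finset.insert_subset_iff, Finset.singleton_subset_iff, mem_qSet] at hsub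
      rw [hu n hn hsub.1.2 hsub.2.1.2 hsub.2.2.2]
  · intro x hx
    have hx : x < 22 := by simpa using hx
    refine ⟨10, fun i => ((qR x i).map qSet).toFinset, ?_, ?_, ?_⟩
    · intro i
      obtain ⟨h1, h2⟩ := q3 hx i
      constructor
      · intro b hb
        simp only [List.mem_toFinset, List.mem_map] at hb
        obtain ⟨m, hm, rfl⟩ := hb
        intro j hj
        rw [mem_qSet] at hj
        rw [Finset.mem_erase, Finset.mem_range]
        refine ⟨?_, hj.1⟩
        rintro rfl
        simp [(h1 m hm).2] at hj
      · intro y hy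
        rw [Finset.mem_erase, Finset.mem_range] at hy
        obtain ⟨m, ⟨hm, hmy⟩, hu⟩ := h2 y hy.2 hy.1
        simp only [List.mem_toFinset, List.mem_map]
        refine ⟨qSet m, ⟨⟨m, hm, rfl⟩, (mem_qSet _ _).2 ⟨hy.2, hmy⟩⟩, ?_⟩
        rintro s ⟨⟨n, hn, rfl⟩, hs⟩
        rw [hu n hn ((mem_qSet _ _).1 hs).2]
    · intro i b hb
      simp only [List.mem_toFinset, List.mem_map] at hb
      obtain ⟨m, hm, rfl⟩ := hb
      obtain ⟨h1, h2⟩ := q4 hx i hm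
      simp only [derivedBlocks, Finset.mem_image, Finset.mem_filter]
      exact ⟨qSet (m ||| 2 ^ x), ⟨(mem_qB _).2 ⟨_, h1, rfl⟩, (mem_qSet _ _).2 ⟨hx, h2⟩⟩,
        qErase hx ((q3 hx i).1 m hm).2⟩
    · intro b hb
      simp only [derivedBlocks, Finset.mem_image, Finset.mem_filter] at hb
      obtain ⟨s, ⟨hs, hxs⟩, rfl⟩ := hb
      obtain ⟨n, hn, rfl⟩ := (mem_qB s).1 hs
      obtain ⟨i, ⟨m, hm, hnm⟩, hu⟩ := q5 hx hn ((mem_qSet _ _).1 hxs).2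
      simp only [List.mem_toFinset, List.mem_map]
      refine ⟨i, ⟨m, hm, ?_⟩, ?_⟩
      · rw [hnm, qErase hx ((q3 hx i).1 m hm).2]
      · rintro j ⟨m', hm', he⟩
        apply hu j
        refine ⟨m', hm', ?_⟩
        rw [hnm, qErase hx ((q3 hx i).1 m hm).2] at he
        rw [hnm, qSet_inj ((q3 hx j).1 m' hm').1 ((q3 hx i).1 m hm).1 he]
end

section
/- For every prime power q and every positive integer n, there exists an RDS(3, q + 1, q^n + 1), i.e., a Steiner system S(3, q + 1, q^n + 1) whose derived design at every point is resolvable. -/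
open Finset

open scoped Pointwise OnePoint

theorem transfer_aux {α : Type} [Finite α] (k v : ℕ) (𝓑 : Set (Set α))
    (hv : Nat.card α = v) (hk : ∀ b ∈ 𝓑, b.ncard = k)
    (ht : ∀ T : Set α, T.ncard = 3 → ∃! b, b ∈ 𝓑 ∧ T ⊆ b)
    (hres : ∀ x : α, ∃ (ι : Type) (_ : Finite ι) (P : ι → Set (Set α)),
      (∀ i, ∀ y, y ≠ x → ∃! b, b ∈ P i ∧ y ∈ b) ∧
      (∀ i, ∀ b ∈ P i, b ∈ 𝓑 ∧ x ∈ b) ∧ ∀ b ∈ 𝓑, x ∈ b → ∃! i, b ∈ P i) :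
    ExistsRDS 3 k v := by
  classical
  have := Fintype.ofFinite α
  obtain ⟨f, hf⟩ : ∃ f : α → ℕ, Function.Injective f :=
    ⟨fun a => (Fintype.equivFin α a : ℕ), fun a b h =>
      (Fintype.equivFin α).injective (Fin.ext h)⟩
  obtain ⟨φ, hφ⟩ : ∃ φ : Set α → Finset ℕ, ∀ b n, n ∈ φ b ↔ ∃ a ∈ b, f a = n :=
    ⟨fun b => (Set.toFinite (f '' b)).toFinset, fun b n => by simp⟩
  have hφf : ∀ b a, f a ∈ φ b ↔ a ∈ b := by
    intro b a
    rw [hφ]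
    exact ⟨fun ⟨a', h, e⟩ => hf e ▸ h, fun h => ⟨a, h, rfl⟩⟩
  have hφi : ∀ b c, φ b = φ c → b = c := by
    intro b c h
    ext a
    rw [← hφf, ← hφf, h]
  have hcard : ∀ b, (φ b).card = b.ncard := by
    intro b
    rw [← Set.ncard_image_of_injective b hf, ← Set.ncard_coe_finset]
    congr 1
    ext n
    simp [hφ]
  refine ⟨φ Set.univ, (Set.toFinite (φ '' 𝓑)).toFinset, ⟨?_, ?_, ?_⟩, ?_⟩
  · rw [hcard, Set.ncard_univ, hv]
  · intro b hb
    simp only [Set.Finite.mem_toFinset, Set.mem_image] at hb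
    obtain ⟨b, hb, rfl⟩ := hb
    refine ⟨?_, by rw [hcard, hk b hb]⟩
    intro n hn
    rw [hφ] at hn ⊢
    obtain ⟨a, -, h⟩ := hn
    exact ⟨a, trivial, h⟩
  · intro T hT hT3
    have hTe : T = φ (f ⁻¹' T) := by
      ext n
      rw [hφ]
      constructor
      · intro h
        obtain ⟨a, -, rfl⟩ := (hφ _ _).1 (hT h)
        exact ⟨a, h, rfl⟩
      · rintro ⟨a, h, rfl⟩
        exact h
    have h3 : (f ⁻¹' (T : Set ℕ)).ncard = 3 := by rw [← hcard, ← hTe, hT3]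
    have hsub : ∀ b, T ⊆ φ b ↔ f ⁻¹' (T : Set ℕ) ⊆ b := by
      intro b
      constructor
      · intro h a ha
        exact (hφf _ _).1 (h ha)
      · intro h n hn
        obtain ⟨a, -, rfl⟩ := (hφ _ _).1 (hT hn)
        exact (hφf _ _).2 (h hn)
    obtain ⟨b, ⟨hb, hTb⟩, hu⟩ := ht _ h3
    refine ⟨φ b, ⟨by simpa using ⟨b, hb, rfl⟩, (hsub b).2 hTb⟩, ?_⟩
    rintro c ⟨hc, hTc⟩
    simp only [Set.Finite.mem_toFinset, Set.mem_image] at hc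
    obtain ⟨c, hc, rfl⟩ := hc
    rw [hu c ⟨hc, (hsub c).1 hTc⟩]
  · intro x hx
    obtain ⟨x, -, rfl⟩ := (hφ _ _).1 hx
    obtain ⟨ι, _, P, h1, h2, h3⟩ := hres x
    have hei : ∀ b c, x ∈ b → x ∈ c → (φ b).erase (f x) = (φ c).erase (f x) → b = c := by
      intro b c hb hc h
      apply hφi
      rw [← Finset.insert_erase ((hφf b x).2 hb), ← Finset.insert_erase ((hφf c x).2 hc), h]
    have hmd : ∀ s, s ∈ derivedBlocks (Set.toFinite (φ '' 𝓑)).toFinset (f x) ↔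
        ∃ b ∈ 𝓑, x ∈ b ∧ (φ b).erase (f x) = s := by
      intro s
      simp only [derivedBlocks, Finset.mem_image, Finset.mem_filter, Set.Finite.mem_toFinset,
        Set.mem_image]
      constructor
      · rintro ⟨_, ⟨⟨b, hb, rfl⟩, hxb⟩, rfl⟩
        exact ⟨b, hb, (hφf _ _).1 hxb, rfl⟩
      · rintro ⟨b, hb, hxb, rfl⟩
        exact ⟨_, ⟨⟨b, hb, rfl⟩, (hφf _ _).2 hxb⟩, rfl⟩
    have e := Finite.equivFin ι
    let Q : Fin (Nat.card ι) → Finset (Finset ℕ) := fun i =>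
      (Set.toFinite ((fun b => (φ b).erase (f x)) '' P (e.symm i))).toFinset
    have hQ : ∀ i s, s ∈ Q i ↔ ∃ b ∈ P (e.symm i), (φ b).erase (f x) = s := by
      intro i s
      simp [Q]
    refine ⟨Nat.card ι, Q, fun i => ⟨?_, ?_⟩, ?_, ?_⟩
    · intro s hs
      obtain ⟨b, hb, rfl⟩ := (hQ _ _).1 hs
      apply Finset.erase_subset_erase
      intro n hn
      rw [hφ] at hn ⊢
      obtain ⟨a, -, h⟩ := hn
      exact ⟨a, trivial, h⟩
    · intro y hy
      obtain ⟨hyx, hy⟩ := Finset.mem_erase.1 hy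
      obtain ⟨y, -, rfl⟩ := (hφ _ _).1 hy
      obtain ⟨b, ⟨hb, hyb⟩, hu⟩ := h1 (e.symm i) y (fun h => hyx (by rw [h]))
      refine ⟨_, ⟨(hQ _ _).2 ⟨b, hb, rfl⟩, Finset.mem_erase.2 ⟨hyx, (hφf _ _).2 hyb⟩⟩, ?_⟩
      rintro s ⟨hs, hys⟩
      obtain ⟨c, hc, rfl⟩ := (hQ _ _).1 hs
      rw [hu c ⟨hc, (hφf _ _).1 (Finset.mem_erase.1 hys).2⟩]
    · intro i s hs
      obtain ⟨b, hb, rfl⟩ := (hQ _ _).1 hs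
      exact (hmd _).2 ⟨b, (h2 _ b hb).1, (h2 _ b hb).2, rfl⟩
    · intro s hs
      obtain ⟨b, hb, hxb, rfl⟩ := (hmd s).1 hs
      obtain ⟨i, hi, hu⟩ := h3 b hb hxb
      refine ⟨e i, (hQ _ _).2 ⟨b, by simpa using hi, rfl⟩, ?_⟩
      intro j hj
      obtain ⟨c, hc, hcb⟩ := (hQ _ _).1 hj
      have : c = b := hei _ _ (h2 _ c hc).2 hxb hcb
      subst this
      rw [← hu _ hc]
      simp

theorem three_trans {K : Type*} [Field K] [DecidableEq K] (a b c : OnePoint K)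
    (hab : a ≠ b) (hac : a ≠ c) (hbc : b ≠ c) :
    ∃ g : Matrix.GeneralLinearGroup (Fin 2) K, g • (∞ : OnePoint K) = a ∧
      g • ((0 : K) : OnePoint K) = b ∧ g • ((1 : K) : OnePoint K) = c := by
  have key : ∀ p q r s : K, p * s - q * r ≠ 0 → 
      ((if r = 0 then ∞ else ((p / r : K) : OnePoint K)) = a) →
      ((if s = 0 then ∞ else ((q / s : K) : OnePoint K)) = b) →
      ((if r + s = 0 then ∞ else (((p + q) / (r + s) : K) : OnePoint K)) = c) →
      ∃ g : Matrix.GeneralLinearGroup (Fin 2) K, g • (∞ : OnePoint K) = a ∧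
      g • ((0 : K) : OnePoint K) = b ∧ g • ((1 : K) : OnePoint K) = c := by
    intro p q r s hd h1 h2 h3
    refine ⟨Matrix.GeneralLinearGroup.mkOfDetNeZero !![p, q; r, s]
      (by rwa [Matrix.det_fin_two_of]), ?_, ?_, ?_⟩
    · rw [← h1, OnePoint.smul_infty_eq_ite]
      simp [Matrix.GeneralLinearGroup.mkOfDetNeZero]
    · rw [← h2, OnePoint.smul_some_eq_ite]
      simp [Matrix.GeneralLinearGroup.mkOfDetNeZero]
    · rw [← h3, OnePoint.smul_some_eq_ite]
      simp [Matrix.GeneralLinearGroup.mkOfDetNeZero]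
  induction a using OnePoint.rec with
  | infty =>
    induction b using OnePoint.rec with
    | infty => exact absurd rfl hab
    | coe b =>
    induction c using OnePoint.rec with
    | infty => exact absurd rfl hac
    | coe c =>
    have hbc' : c - b ≠ 0 := sub_ne_zero.2 (fun h => hbc (by rw [h]))
    exact key (c - b) b 0 1 (by simpa using hbc') (by simp) (by simp) (by simp)
  | coe a =>
    induction b using OnePoint.rec with
    | infty =>
      induction c using OnePoint.rec with
      | infty => exact absurd rfl hbc
      | coe c =>
      have hac' : c - a ≠ 0 := sub_ne_zero.2 (fun h => hac (by rw [h]))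
      exact key a (c - a) 1 0 (by simpa [sub_eq_zero, eq_comm] using hac') (by simp) (by simp)
        (by simp)
    | coe b =>
      have hab' : a - b ≠ 0 := sub_ne_zero.2 (fun h => hab (by rw [h]))
      induction c using OnePoint.rec with
      | infty =>
        refine key a (-b) 1 (-1) ?_ (by simp) (by simp) (by simp)
        intro h
        apply hab'
        linear_combination -h
      | coe c =>
        have hac' : a - c ≠ 0 := sub_ne_zero.2 (fun h => hac (by rw [h]))
        have hbc' : c - b ≠ 0 := sub_ne_zero.2 (fun h => hbc (by rw [h]))
        have hs : c - b + (a - c) ≠ 0 := by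
          intro h
          apply hab'
          linear_combination h
        refine key (a * (c - b)) (b * (a - c)) (c - b) (a - c) ?_ ?_ ?_ ?_
        · have : a * (c - b) * (a - c) - b * (a - c) * (c - b) = (a - b) * (a - c) * (c - b) := by
            ring
          rw [this]
          exact mul_ne_zero (mul_ne_zero hab' hac') hbc'
        · rw [if_neg hbc', mul_div_cancel_right₀ _ hbc']
        · rw [if_neg hac', mul_div_cancel_right₀ _ hac']
        · rw [if_neg hs]
          congr 1
          rw [div_eq_iff hs]
          ring

theorem fix_triv {K : Type*} [Field K] [DecidableEq K] (g : Matrix.GeneralLinearGroup (Fin 2) K)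
    (h1 : g • (∞ : OnePoint K) = ∞) (h2 : g • ((0 : K) : OnePoint K) = (0 : K))
    (h3 : g • ((1 : K) : OnePoint K) = (1 : K)) (x : OnePoint K) : g • x = x := by
  induction x using OnePoint.rec with
  | infty => exact h1
  | coe x =>
    rw [OnePoint.smul_infty_eq_self_iff] at h1
    rw [OnePoint.smul_some_eq_ite] at h2 h3 ⊢
    simp only [h1, zero_mul, zero_add, mul_zero, mul_one] at h2 h3 ⊢
    split_ifs at h2 h3 ⊢ with h
    · simp at h2
    · simp only [OnePoint.coe_eq_coe] at h2 h3 ⊢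
      rw [div_eq_iff h] at h2 h3 ⊢
      linear_combination x * h3 + (1 - x) * h2

/-- affine form of elements fixing infinity -/
theorem affine_form {K : Type*} [Field K] [DecidableEq K]
    (g : Matrix.GeneralLinearGroup (Fin 2) K)
    (h1 : g • (∞ : OnePoint K) = ∞) : ∃ a b : K, a ≠ 0 ∧
      ∀ x : K, g • (x : OnePoint K) = ((a * x + b : K) : OnePoint K) := by
  rw [OnePoint.smul_infty_eq_self_iff] at h1
  have hd := g.det_ne_zero
  rw [Matrix.det_fin_two, h1] at hd
  have h00 : g 0 0 ≠ 0 := by intro h; simp [h] at hd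
  have h11 : g 1 1 ≠ 0 := by intro h; simp [h] at hd
  refine ⟨g 0 0 / g 1 1, g 0 1 / g 1 1, div_ne_zero h00 h11, fun x => ?_⟩
  rw [OnePoint.smul_some_eq_ite, h1, zero_mul, zero_add, if_neg h11]
  congr 1
  field_simp

theorem affine_exists {K : Type*} [Field K] [DecidableEq K] (a b : K) (ha : a ≠ 0) :
    ∃ g : Matrix.GeneralLinearGroup (Fin 2) K, g • (∞ : OnePoint K) = ∞ ∧
      ∀ x : K, g • (x : OnePoint K) = ((a * x + b : K) : OnePoint K) := by
  refine ⟨Matrix.GeneralLinearGroup.mkOfDetNeZero !![a, b; 0, 1]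
      (by simpa [Matrix.det_fin_two_of] using ha), ?_, fun x => ?_⟩
  · rw [OnePoint.smul_infty_eq_ite]
    simp [Matrix.GeneralLinearGroup.mkOfDetNeZero]
  · rw [OnePoint.smul_some_eq_ite]
    simp [Matrix.GeneralLinearGroup.mkOfDetNeZero]

/-- The base block. -/
def baseBlock (F K : Type) [Field F] [Field K] [Algebra F K] : Set (OnePoint K) :=
  Set.range (OnePoint.map (algebraMap F K))

theorem mem_baseBlock_infty (F K : Type) [Field F] [Field K] [Algebra F K] :
    (∞ : OnePoint K) ∈ baseBlock F K := ⟨∞, rfl⟩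

theorem mem_baseBlock_coe (F K : Type) [Field F] [Field K] [Algebra F K] (x : K) :
    (x : OnePoint K) ∈ baseBlock F K ↔ ∃ y : F, algebraMap F K y = x := by
  constructor
  · rintro ⟨y, hy⟩
    induction y using OnePoint.rec with
    | infty => simp at hy
    | coe y => exact ⟨y, by simpa using hy⟩
  · rintro ⟨y, rfl⟩
    exact ⟨y, by simp⟩

theorem base_trans {F K : Type} [Field F] [Field K] [Algebra F K] [DecidableEq K]
    (a b c : OnePoint K) (ha : a ∈ baseBlock F K) (hb : b ∈ baseBlock F K)
    (hc : c ∈ baseBlock F K) (hab : a ≠ b) (hac : a ≠ c) (hbc : b ≠ c) :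
    ∃ g : Matrix.GeneralLinearGroup (Fin 2) K, g • (∞ : OnePoint K) = a ∧
      g • ((0 : K) : OnePoint K) = b ∧ g • ((1 : K) : OnePoint K) = c ∧
      g • baseBlock F K = baseBlock F K := by
  classical
  obtain ⟨a, rfl⟩ := ha
  obtain ⟨b, rfl⟩ := hb
  obtain ⟨c, rfl⟩ := hc
  obtain ⟨g, h1, h2, h3⟩ := three_trans a b c (fun h => hab (by rw [h]))
    (fun h => hac (by rw [h])) (fun h => hbc (by rw [h]))
  refine ⟨g.map (algebraMap F K), ?_, ?_, ?_, ?_⟩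
  · rw [← h1, OnePoint.map_smul]; simp
  · rw [← h2, OnePoint.map_smul]; simp
  · rw [← h3, OnePoint.map_smul]; simp
  · ext x
    rw [Set.mem_smul_set]
    constructor
    · rintro ⟨_, ⟨y, rfl⟩, rfl⟩
      exact ⟨g • y, OnePoint.map_smul _ _ _⟩
    · rintro ⟨y, rfl⟩
      refine ⟨_, ⟨g⁻¹ • y, rfl⟩, ?_⟩
      rw [← OnePoint.map_smul, smul_inv_smul]

/-- A member of the orbit through three base points is the base block. -/
theorem base_unique {F K : Type} [Field F] [Field K] [Algebra F K] [DecidableEq K]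
    (k : Matrix.GeneralLinearGroup (Fin 2) K)
    (h1 : (∞ : OnePoint K) ∈ k • baseBlock F K)
    (h2 : ((0 : K) : OnePoint K) ∈ k • baseBlock F K)
    (h3 : ((1 : K) : OnePoint K) ∈ k • baseBlock F K) : k • baseBlock F K = baseBlock F K := by
  rw [Set.mem_smul_set_iff_inv_smul_mem] at h1 h2 h3
  obtain ⟨m, m1, m2, m3, m4⟩ := base_trans _ _ _ h1 h2 h3 (by simp) (by simp) (by simp)
  have ht := fix_triv (k * m) (by rw [mul_smul, m1, smul_inv_smul])
    (by rw [mul_smul, m2, smul_inv_smul]) (by rw [mul_smul, m3, smul_inv_smul])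
  have : k • baseBlock F K = (k * m) • baseBlock F K := by rw [mul_smul, m4]
  rw [this]
  ext x
  rw [Set.mem_smul_set]
  simp [ht]

theorem orbit_infty {F K : Type} [Field F] [Field K] [Algebra F K] [DecidableEq K]
    (b : Set (OnePoint K)) :
    ((∃ g : Matrix.GeneralLinearGroup (Fin 2) K, g • baseBlock F K = b) ∧ ∞ ∈ b) ↔
      ∃ a : K, a ≠ 0 ∧ ∃ t : K, ∞ ∈ b ∧ ∀ x : K, (x : OnePoint K) ∈ b ↔ x - t ∈ F ∙ a := by
  have aff : ∀ (g : Matrix.GeneralLinearGroup (Fin 2) K) (a t : K), a ≠ 0 →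
      (∀ x : K, g • (x : OnePoint K) = ((a * x + t : K) : OnePoint K)) → 
      g • (∞ : OnePoint K) = ∞ →
      ∀ x : K, (x : OnePoint K) ∈ g • baseBlock F K ↔ x - t ∈ F ∙ a := by
    intro g a t ha hg hi x
    rw [Set.mem_smul_set, Submodule.mem_span_singleton]
    constructor
    · rintro ⟨y, hy, hyx⟩
      induction y using OnePoint.rec with
      | infty => rw [hi] at hyx; simp at hyx
      | coe y =>
        obtain ⟨z, rfl⟩ := (mem_baseBlock_coe F K y).1 hy
        rw [hg, OnePoint.coe_eq_coe] at hyx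
        refine ⟨z, ?_⟩
        rw [← hyx, Algebra.smul_def]
        ring
    · rintro ⟨z, hz⟩
      refine ⟨(algebraMap F K z : K), (mem_baseBlock_coe F K _).2 ⟨z, rfl⟩, ?_⟩
      rw [hg, OnePoint.coe_eq_coe]
      rw [Algebra.smul_def] at hz
      linear_combination hz
  have infm : ∀ (g : Matrix.GeneralLinearGroup (Fin 2) K), g • (∞ : OnePoint K) = ∞ →
      ∞ ∈ g • baseBlock F K := fun g h => ⟨∞, mem_baseBlock_infty F K, h⟩
  constructor
  · rintro ⟨⟨g, rfl⟩, hi⟩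
    obtain ⟨m, hm, hmB⟩ : ∃ m : Matrix.GeneralLinearGroup (Fin 2) K,
        m • (∞ : OnePoint K) = g⁻¹ • ∞ ∧ m • baseBlock F K = baseBlock F K := by
      have hi' := Set.mem_smul_set_iff_inv_smul_mem.1 hi
      have h0 : ((0 : K) : OnePoint K) ∈ baseBlock F K := (mem_baseBlock_coe F K _).2 ⟨0, by simp⟩
      have h1 : ((1 : K) : OnePoint K) ∈ baseBlock F K := (mem_baseBlock_coe F K _).2 ⟨1, by simp⟩
      have hI := mem_baseBlock_infty F K
      have h01 : ((0 : K) : OnePoint K) ≠ ((1 : K) : OnePoint K) := by simp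
      have h0I : ((0 : K) : OnePoint K) ≠ ∞ := by simp
      have h1I : ((1 : K) : OnePoint K) ≠ ∞ := by simp
      generalize g⁻¹ • (∞ : OnePoint K) = p at hi'
      by_cases hp0 : p = ((0 : K) : OnePoint K)
      · obtain ⟨m, e1, -, -, e2⟩ := base_trans p _ _ hi' h1 hI (by rw [hp0]; exact h01)
          (by rw [hp0]; exact h0I) h1I
        exact ⟨m, e1, e2⟩
      · by_cases hp1 : p = ((1 : K) : OnePoint K)
        · obtain ⟨m, e1, -, -, e2⟩ := base_trans p _ _ hi' h0 hI hp0
            (by rw [hp1]; exact h1I) h0I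
          exact ⟨m, e1, e2⟩
        · obtain ⟨m, e1, -, -, e2⟩ := base_trans p _ _ hi' h0 h1 hp0 hp1 h01
          exact ⟨m, e1, e2⟩
    have hgm : (g * m) • (∞ : OnePoint K) = ∞ := by rw [mul_smul, hm, smul_inv_smul]
    obtain ⟨a, t, ha, h⟩ := affine_form (g * m) hgm
    refine ⟨a, ha, t, hi, ?_⟩
    have := aff (g * m) a t ha h hgm
    rwa [mul_smul, hmB] at this
  · rintro ⟨a, ha, t, hi, h⟩
    obtain ⟨g, hgi, hg⟩ := affine_exists a t ha
    refine ⟨⟨g, ?_⟩, hi⟩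
    ext x
    induction x using OnePoint.rec with
    | infty => exact iff_of_true (infm g hgi) hi
    | coe x => rw [aff g a t ha hg hgi, h]

theorem res_infty {F K : Type} [Field F] [Field K] [Algebra F K] [DecidableEq K] [Finite K] :
    ∃ (ι : Type) (_ : Finite ι) (P : ι → Set (Set (OnePoint K))),
      (∀ i, ∀ y, y ≠ ∞ → ∃! b, b ∈ P i ∧ y ∈ b) ∧
      (∀ i, ∀ b ∈ P i, b ∈ Set.range (fun g : Matrix.GeneralLinearGroup (Fin 2) K =>
        g • baseBlock F K) ∧ ∞ ∈ b) ∧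
      ∀ b ∈ Set.range (fun g : Matrix.GeneralLinearGroup (Fin 2) K =>
        g • baseBlock F K), ∞ ∈ b → ∃! i, b ∈ P i := by
  refine ⟨{H : Submodule F K // ∃ a : K, a ≠ 0 ∧ H = F ∙ a}, inferInstance,
    fun H => {b | ∃ t : K, ∞ ∈ b ∧ ∀ x : K, (x : OnePoint K) ∈ b ↔ x - t ∈ H.1}, ?_, ?_, ?_⟩
  · rintro ⟨H, hH⟩ y hy
    induction y using OnePoint.rec with
    | infty => exact absurd rfl hy
    | coe y =>
      refine ⟨{z | ∀ x : K, z = x → x - y ∈ H}, ⟨⟨y, ?_, ?_⟩, ?_⟩, ?_⟩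
      · intro x hx; simp at hx
      · intro x
        constructor
        · intro h; exact h x rfl
        · intro h x' hx
          rw [← OnePoint.coe_eq_coe.1 hx]; exact h
      · intro x hx
        rw [← OnePoint.coe_eq_coe.1 hx]; simp
      · rintro b ⟨⟨t, hi, hb⟩, hyb⟩
        have hyt := (hb y).1 hyb
        ext z
        induction z using OnePoint.rec with
        | infty => exact iff_of_true hi (by intro x hx; simp at hx)
        | coe z =>
          rw [hb]
          constructor
          · intro h x hx
            rw [← OnePoint.coe_eq_coe.1 hx]
            have := H.sub_mem h hyt
            simpa using this
          · intro h
            have := H.add_mem (h z rfl) hyt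
            simpa using this
  · rintro ⟨_, a, ha, rfl⟩ b ⟨t, hi, hb⟩
    exact (orbit_infty b).2 ⟨a, ha, t, hi, hb⟩
  · rintro b hb hi
    obtain ⟨a, ha, t, -, h⟩ := (orbit_infty b).1 ⟨hb, hi⟩
    refine ⟨⟨F ∙ a, a, ha, rfl⟩, ⟨t, hi, h⟩, ?_⟩
    rintro ⟨H, hH⟩ ⟨s, -, hs⟩
    apply Subtype.ext
    show H = F ∙ a
    have hst : t - s ∈ H := (hs t).1 ((h t).2 (by simp))
    ext x
    have := (h (x + t)).symm.trans (hs (x + t))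
    rw [add_sub_cancel_right] at this
    rw [this, add_sub_assoc]
    exact (H.add_mem_iff_left hst).symm

theorem main_fields {F K : Type} [Field F] [Field K] [Algebra F K] [Finite F] [Finite K] :
    ExistsRDS 3 (Nat.card F + 1) (Nat.card K + 1) := by
  classical
  have cardO : ∀ L : Type, Finite L → Nat.card (OnePoint L) = Nat.card L + 1 := by
    intro L _
    exact Finite.card_option
  have : Finite (OnePoint K) := inferInstanceAs (Finite (Option K))
  have : Finite (OnePoint F) := inferInstanceAs (Finite (Option F))
  refine transfer_aux _ _ (Set.range (fun g : Matrix.GeneralLinearGroup (Fin 2) K =>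
        g • baseBlock F K)) (cardO K inferInstance) ?_ ?_ ?_
  · rintro _ ⟨g, rfl⟩
    show (g • baseBlock F K).ncard = _
    rw [← cardO F inferInstance, ← Set.image_smul,
      Set.ncard_image_of_injective _ (MulAction.injective g), baseBlock, ← Set.image_univ,
      Set.ncard_image_of_injective, Set.ncard_univ]
    exact Option.map_injective (algebraMap F K).injective
  · intro T hT
    obtain ⟨a, b, c, hab, hac, hbc, rfl⟩ := Set.ncard_eq_three.1 hT
    obtain ⟨g, h1, h2, h3⟩ := three_trans a b c hab hac hbc
    have h0 : ((0 : K) : OnePoint K) ∈ baseBlock F K := (mem_baseBlock_coe F K _).2 ⟨0, by simp⟩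
    have h1' : ((1 : K) : OnePoint K) ∈ baseBlock F K := (mem_baseBlock_coe F K _).2 ⟨1, by simp⟩
    refine ⟨g • baseBlock F K, ⟨⟨g, rfl⟩, ?_⟩, ?_⟩
    · rintro x (rfl | rfl | rfl)
      · exact ⟨_, mem_baseBlock_infty F K, h1⟩
      · exact ⟨_, h0, h2⟩
      · exact ⟨_, h1', h3⟩
    · rintro _ ⟨⟨h, rfl⟩, hs⟩
      have := base_unique (F := F) (g⁻¹ * h) ?_ ?_ ?_
      · show h • baseBlock F K = _
        rw [mul_smul, inv_smul_eq_iff] at this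
        exact this
      · rw [mul_smul, Set.mem_smul_set_iff_inv_smul_mem, inv_inv, h1]
        exact hs (by simp)
      · rw [mul_smul, Set.mem_smul_set_iff_inv_smul_mem, inv_inv, h2]
        exact hs (by simp)
      · rw [mul_smul, Set.mem_smul_set_iff_inv_smul_mem, inv_inv, h3]
        exact hs (by simp)
  · intro x
    obtain ⟨g, hg⟩ : ∃ g : Matrix.GeneralLinearGroup (Fin 2) K, g • (∞ : OnePoint K) = x := by
      by_cases hx : x = ∞
      · exact ⟨1, by rw [one_smul, hx]⟩
      · by_cases h0 : x = ((0 : K) : OnePoint K)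
        · obtain ⟨g, h, -⟩ := three_trans x ∞ ((1 : K) : OnePoint K) hx (by rw [h0]; simp) (by simp)
          exact ⟨g, h⟩
        · obtain ⟨g, h, -⟩ := three_trans x ∞ ((0 : K) : OnePoint K) hx h0 (by simp)
          exact ⟨g, h⟩
    have hg' : g⁻¹ • x = ∞ := by rw [← hg, inv_smul_smul]
    obtain ⟨ι, hι, P, p1, p2, p3⟩ := res_infty (F := F) (K := K)
    refine ⟨ι, hι, fun i => {b | g⁻¹ • b ∈ P i}, ?_, ?_, ?_⟩
    · intro i y hy
      obtain ⟨b, ⟨hb, hyb⟩, hu⟩ := p1 i (g⁻¹ • y) (fun h => hy (by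
        rw [← hg, ← h, smul_inv_smul]))
      refine ⟨g • b, ⟨?_, Set.mem_smul_set_iff_inv_smul_mem.2 hyb⟩, ?_⟩
      · show g⁻¹ • g • b ∈ P i
        rwa [inv_smul_smul]
      · rintro c ⟨hc, hyc⟩
        rw [← hu (g⁻¹ • c) ⟨hc, Set.smul_mem_smul_set hyc⟩, smul_inv_smul]
    · intro i b hb
      obtain ⟨⟨h, hh⟩, hi⟩ := p2 i _ hb
      refine ⟨⟨g * h, ?_⟩, ?_⟩
      · show (g * h) • baseBlock F K = b
        have hh' : h • baseBlock F K = g⁻¹ • b := hh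
        rw [mul_smul, hh', smul_inv_smul]
      · rw [← hg'] at hi
        exact Set.smul_mem_smul_set_iff.1 hi
    · rintro _ ⟨h, rfl⟩ hx
      exact p3 (g⁻¹ • h • baseBlock F K) ⟨g⁻¹ * h, mul_smul _ _ _⟩
        (by rw [← hg']; exact Set.smul_mem_smul_set hx)

/-- For any prime power q and any positive integer n, there exists an
RDS(3, q + 1, q^n + 1). -/
theorem stmt_6 (q n : ℕ) (hq : IsPrimePow q) (hn : 0 < n) :
    ExistsRDS 3 (q + 1) (q ^ n + 1) := by
  obtain ⟨p, k, hp, hk, rfl⟩ := hq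
  have : Fact p.Prime := ⟨hp.nat_prime⟩
  have : NeZero n := ⟨hn.ne'⟩
  have h := main_fields (F := GaloisField p k) (K := FiniteField.Extension (GaloisField p k) p n)
  rwa [FiniteField.natCard_extension, GaloisField.card p k hk.ne'] at h
end
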